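/- Assume the Riemann Hypothesis. There is a positive absolute constant C such that for all T ≥ 2 and all positive integers k, Σ_{0<γ≤T} m(γ)^{2k−1} = Σ_{0<γ_d≤T} m(γ_d)^{2k} ≤ (Ck)^{2k−1} · T log T, where the first sum is over ordinates counted with multiplicity and the second over distinct ordinates. -/

import Mathlib

open Filter MeasureTheory
open scoped Real

noncomputable section

/-- The multiplicity (order of vanishing) of the Riemann zeta function at a point `z`:
the least `n` such that the `n`-th derivative of `ζ` at `z` is nonzero. -/
def zetaMult (z : ℂ) : ℕ := sInf {n : ℕ | iteratedDeriv n riemannZeta z ≠ 0}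

/-- Under RH, the set of ordinates `γ` with `0 < γ ≤ T` of nontrivial zeros `1/2 + iγ` of `ζ`. -/
def zetaOrds (T : ℝ) : Set ℝ :=
  {γ : ℝ | 0 < γ ∧ γ ≤ T ∧ riemannZeta (1 / 2 + γ * Complex.I) = 0}

/-- The multiplicity of the zero of `ζ` at `1/2 + iγ`. -/
def ordMult (γ : ℝ) : ℕ := zetaMult (1 / 2 + γ * Complex.I)

/-- `N(T)`: the number of ordinates of nontrivial zeros in `(0, T]`, counted with multiplicity. -/
def zetaN (T : ℝ) : ℕ := ∑ᶠ γ ∈ zetaOrds T, ordMult γ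

/-- The next ordinate of a nontrivial zero strictly above `γ`. -/
def nextOrd (γ : ℝ) : ℝ :=
  sInf {γ' : ℝ | γ < γ' ∧ riemannZeta (1 / 2 + γ' * Complex.I) = 0}

/-- fractional part cut off below `1`. -/
def fracCut : ℝ → ℂ := fun t => if 1 < t then ((Int.fract t : ℝ) : ℂ) else 0

lemma fracCut_norm_le (t : ℝ) : ‖fracCut t‖ ≤ 1 := by
  unfold fracCut
  split_ifs
  · rw [Complex.norm_real, Real.norm_of_nonneg (Int.fract_nonneg _)]
    exact (Int.fract_lt_one _).le
  · simp

lemma fracCut_meas : Measurable fracCut := by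
  unfold fracCut
  refine Measurable.ite measurableSet_Ioi ?_ measurable_const
  exact Complex.measurable_ofReal.comp measurable_fract

lemma fracCut_mellin_diff {s : ℂ} (hs : s.re < 0) : DifferentiableAt ℂ (mellin fracCut) s := by
  refine mellin_differentiableAt_of_isBigO_rpow (a := 0) (b := s.re - 1) ?_ ?_ hs ?_ (by linarith)
  · refine LocallyIntegrable.locallyIntegrableOn ?_ _
    refine (locallyIntegrable_const (1:ℝ)).mono fracCut_meas.aestronglyMeasurable ?_
    exact Eventually.of_forall fun t => by simpa using fracCut_norm_le t
  · refine Asymptotics.IsBigO.of_bound 1 (Eventually.of_forall fun t => ?_)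
    simpa using fracCut_norm_le t
  · refine Asymptotics.IsBigO.of_bound 1 ?_
    filter_upwards [Ioo_mem_nhdsGT (zero_lt_one' ℝ)] with t ht
    have : fracCut t = 0 := by simp [fracCut, not_lt.mpr ht.2.le]
    rw [this]; simp

lemma mellin_fracCut_eq (s : ℂ) :
    mellin fracCut (-s) = ∫ t in Set.Ioi (1:ℝ), (t:ℂ) ^ (-s - 1) * fracCut t := by
  unfold mellin
  have := setIntegral_eq_of_subset_of_forall_sdiff_eq_zero (μ := volume) (s := Set.Ioi (1:ℝ)) (t := Set.Ioi (0:ℝ))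
    (f := fun t : ℝ => (t:ℂ) ^ (-s - 1) • fracCut t) measurableSet_Ioi
    (Set.Ioi_subset_Ioi zero_le_one) (by
      intro x hx
      simp only [Set.mem_sdiff, Set.mem_Ioi] at hx
      simp [fracCut, hx.2])
  rw [this]; simp

lemma fracCut_mellin_norm {s : ℂ} (hs : 0 < s.re) : ‖mellin fracCut (-s)‖ ≤ 1 / s.re := by
  have h1 := mellin_fracCut_eq s
  have h2 : ∫ t in Set.Ioi (1:ℝ), t ^ (-s.re - 1) = 1 / s.re := by
    rw [integral_Ioi_rpow_of_lt (by linarith) zero_lt_one]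
    simp
  rw [h1, ← h2]
  refine norm_integral_le_of_norm_le (integrableOn_Ioi_rpow_of_lt (by linarith) zero_lt_one) ?_
  refine (ae_restrict_iff' measurableSet_Ioi).2 (Eventually.of_forall fun t ht => ?_)
  have ht0 : (0:ℝ) < t := lt_trans zero_lt_one ht
  rw [norm_mul, Complex.norm_cpow_eq_rpow_re_of_pos ht0]
  simp only [Complex.sub_re, Complex.neg_re, Complex.one_re]
  exact mul_le_of_le_one_right (by positivity) (fracCut_norm_le t)

lemma zeta_frac {s : ℂ} (hs : 1 < s.re) :
    riemannZeta s = s / (s - 1) - s * mellin fracCut (-s) := by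
  have hs0 : (1:ℝ) ≠ s.re := hs.ne
  have key := LSeries_eq_mul_integral' (1 : ℕ → ℂ) zero_le_one hs (by
    refine Asymptotics.IsBigO.of_bound 1 (Eventually.of_forall fun n => ?_)
    simp)
  rw [LSeries_one_eq_riemannZeta hs] at key
  have h1 := mellin_fracCut_eq s
  have h2 : ∫ t in Set.Ioi (1:ℝ), (t:ℂ) ^ (-s) = 1 / (s - 1) := by
    rw [integral_Ioi_cpow_of_lt (by simpa using hs) zero_lt_one]
    have : s - 1 ≠ 0 := by
      intro h
      have := congrArg Complex.re h
      simp at this; linarith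
    have h' : -s + 1 ≠ 0 := by
      intro h; apply this; linear_combination -h
    simp; field_simp; ring
  have i1 : IntegrableOn (fun t : ℝ => (t:ℂ) ^ (-s)) (Set.Ioi 1) :=
    integrableOn_Ioi_cpow_of_lt (by simpa using hs) zero_lt_one
  have i2 : IntegrableOn (fun t : ℝ => (t:ℂ) ^ (-s - 1) * fracCut t) (Set.Ioi 1) := by
    have := integrableOn_Ioi_cpow_of_lt (a := -s - 1) (c := 1) (by simp; linarith) zero_lt_one
    refine Integrable.mul_bdd (c := 1) this fracCut_meas.aestronglyMeasurable ?_
    exact Eventually.of_forall fun t => fracCut_norm_le t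
  rw [key]
  have h3 : ∫ t in Set.Ioi (1:ℝ), (∑ k ∈ Finset.Icc 1 ⌊t⌋₊, (1 : ℕ → ℂ) k) * (t:ℂ) ^ (-(s + 1))
      = ∫ t in Set.Ioi (1:ℝ), ((t:ℂ) ^ (-s) - (t:ℂ) ^ (-s - 1) * fracCut t) := by
    refine setIntegral_congr_fun measurableSet_Ioi fun t ht => ?_
    have ht0 : (0:ℝ) < t := lt_trans zero_lt_one ht
    have htc : (t:ℂ) ≠ 0 := by exact_mod_cast ht0.ne'
    have hf : fracCut t = (t:ℂ) - (⌊t⌋₊ : ℂ) := by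
      have : (1:ℝ) < t := ht
      simp only [fracCut, this, if_true]
      rw [Int.fract, ← natCast_floor_eq_intCast_floor ht0.le]
      push_cast; rfl
    have h4 : (t:ℂ) ^ (-s) = (t:ℂ) ^ (-s - 1) * t := by
      rw [Complex.cpow_sub _ _ htc, Complex.cpow_one]; field_simp
    simp only [Pi.one_apply, Finset.sum_const, Nat.card_Icc, add_tsub_cancel_right, nsmul_eq_mul, mul_one]
    rw [hf, h4, neg_add']
    ring
  rw [h3, integral_sub i1 i2, h2, ← h1]
  ring

lemma zeta1_eq {s : ℂ} (hs : 0 < s.re) :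
    riemannZeta₁ s = s - s * (s - 1) * mellin fracCut (-s) := by
  have hU : IsOpen {z : ℂ | 0 < z.re} := isOpen_lt continuous_const Complex.continuous_re
  have hc : IsPreconnected {z : ℂ | 0 < z.re} := (convex_halfSpace_re_gt 0).isPreconnected
  have hd : DifferentiableOn ℂ (fun s => s - s * (s - 1) * mellin fracCut (-s)) {z : ℂ | 0 < z.re} := by
    intro z hz
    have h1 : DifferentiableAt ℂ (mellin fracCut) (-z) := fracCut_mellin_diff (by simpa using hz)
    have h2 : DifferentiableAt ℂ (fun s => mellin fracCut (-s)) z :=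
      DifferentiableAt.comp (g := mellin fracCut) z h1 (differentiableAt_id.neg)
    exact (by fun_prop : DifferentiableAt ℂ (fun s => s - s * (s - 1) * mellin fracCut (-s)) z).differentiableWithinAt
  refine AnalyticOnNhd.eqOn_of_preconnected_of_eventuallyEq (z₀ := 2)
    (differentiable_riemannZeta₁.differentiableOn.analyticOnNhd hU) (hd.analyticOnNhd hU) hc
    (by simp) ?_ hs
  have : {z : ℂ | 1 < z.re} ∈ nhds (2:ℂ) :=
    (isOpen_lt continuous_const Complex.continuous_re).mem_nhds (by simp)
  filter_upwards [this] with z hz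
  have hz1 : z ≠ 1 := by rintro rfl; simp at hz
  have hz2 : z - 1 ≠ 0 := sub_ne_zero.2 hz1
  have e := riemannZeta_eq_inv_sub_mul hz1
  rw [zeta_frac hz] at e
  field_simp at e
  linear_combination -e

lemma zeta1_bound {s : ℂ} (hs : 1 / 4 ≤ s.re) : ‖riemannZeta₁ s‖ ≤ 4 * (‖s‖ + 1) ^ 2 := by
  rw [zeta1_eq (by linarith)]
  have h1 : ‖mellin fracCut (-s)‖ ≤ 4 := by
    refine (fracCut_mellin_norm (by linarith)).trans ?_
    rw [div_le_iff₀ (by linarith)]; linarith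
  calc ‖s - s * (s - 1) * mellin fracCut (-s)‖ ≤ ‖s‖ + ‖s‖ * ‖s - 1‖ * ‖mellin fracCut (-s)‖ := by
        refine (norm_sub_le _ _).trans ?_
        rw [norm_mul, norm_mul]
    _ ≤ ‖s‖ + ‖s‖ * (‖s‖ + 1) * 4 := by
        gcongr
        exact (norm_sub_le _ _).trans (by simp)
    _ ≤ _ := by nlinarith [norm_nonneg s]

lemma zeta1_of_ne {s : ℂ} (hs : s ≠ 1) : riemannZeta₁ s = (s - 1) * riemannZeta s := by
  rw [riemannZeta_eq_inv_sub_mul hs, mul_inv_cancel_left₀ (sub_ne_zero.2 hs)]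

lemma zeta1_ne_zero (hRH : RiemannHypothesis) {s : ℂ} (hs : 1 / 2 < s.re) : riemannZeta₁ s ≠ 0 := by
  by_cases h1 : s = 1
  · rw [h1]; simp
  · rw [zeta1_of_ne h1]
    refine mul_ne_zero (sub_ne_zero.2 h1) fun h => ?_
    have := hRH s h (by
      rintro ⟨n, rfl⟩
      have : ((-2 * ((n:ℂ) + 1)) : ℂ).re = -2 * ((n:ℝ) + 1) := by simp
      rw [this] at hs
      have : (0:ℝ) ≤ n := Nat.cast_nonneg n
      linarith) h1
    linarith

lemma zeta_sub_one_le {s : ℂ} (hs : 2 ≤ s.re) : ‖riemannZeta s - 1‖ ≤ 3 / 4 := by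
  rw [zeta_eq_tsum_one_div_nat_cpow (by linarith)]
  have hz : Summable (fun n : ℕ => (1:ℝ) / (n:ℝ) ^ 2) := hasSum_zeta_two.summable
  have hb : ∀ n : ℕ, ‖(1:ℂ) / (n:ℂ) ^ s‖ ≤ (1:ℝ) / (n:ℝ) ^ 2 := by
    intro n
    rcases Nat.eq_zero_or_pos n with rfl | hn
    · have : s ≠ 0 := by rintro rfl; norm_num at hs
      simp [Complex.zero_cpow this]
    · rw [norm_div, norm_one, Complex.norm_natCast_cpow_of_pos hn]
      have : (1:ℝ) ≤ n := by exact_mod_cast hn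
      gcongr
      rw [← Real.rpow_natCast]
      exact Real.rpow_le_rpow_of_exponent_le this (by simpa using hs)
  have hs1 : Summable (fun n : ℕ => (1:ℂ) / (n:ℂ) ^ s) := Summable.of_norm_bounded hz hb
  have e1 := hs1.sum_add_tsum_nat_add 2
  have e2 := hz.sum_add_tsum_nat_add 2
  have hs0 : s ≠ 0 := by rintro rfl; norm_num at hs
  simp only [Finset.sum_range_succ, Finset.sum_range_zero, Nat.cast_zero, Nat.cast_one, Complex.zero_cpow hs0, Complex.one_cpow] at e1
  norm_num at e2
  have e3 : ∑' n : ℕ, (1:ℂ) / (n:ℂ) ^ s - 1 = ∑' n : ℕ, (1:ℂ) / ((n + 2 : ℕ):ℂ) ^ s := by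
    rw [← e1]; simp
  rw [e3]
  have hz2 := (summable_nat_add_iff 2).2 hz
  refine (tsum_of_norm_bounded hz2.hasSum (fun n => hb (n+2))).trans ?_
  have e4 := hz.sum_add_tsum_nat_add 2
  rw [hasSum_zeta_two.tsum_eq] at e4
  simp only [Finset.sum_range_succ, Finset.sum_range_zero, Nat.cast_zero, Nat.cast_one] at e4
  have : π < 3.1416 := Real.pi_lt_d4
  have : 0 < π := Real.pi_pos
  nlinarith

lemma zeta1_lower {s : ℂ} (hs : 2 ≤ s.re) : 1 / 4 ≤ ‖riemannZeta₁ s‖ := by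
  have h1 : s ≠ 1 := by rintro rfl; norm_num at hs
  rw [zeta1_of_ne h1, norm_mul]
  have h2 : 1 ≤ ‖s - 1‖ := by
    refine le_trans ?_ (Complex.re_le_norm _)
    simp; linarith
  have h3 := zeta_sub_one_le hs
  have h4 : 1 / 4 ≤ ‖riemannZeta s‖ := by
    have := norm_sub_norm_le (1:ℂ) (1 - riemannZeta s)
    rw [norm_sub_rev 1] at this
    simp at this
    linarith
  nlinarith [norm_nonneg (riemannZeta s)]

lemma exists_log_ball {F : ℂ → ℂ} {c : ℂ} {R : ℝ} (hR : 0 < R) (hF : Differentiable ℂ F)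
    (h0 : ∀ z ∈ Metric.ball c R, F z ≠ 0) :
    ∃ l : ℂ → ℂ, l c = 0 ∧ (∀ z ∈ Metric.ball c R, HasDerivAt l (logDeriv F z) z) ∧
      ∀ z ∈ Metric.ball c R, F z = F c * Complex.exp (l z) := by
  have hd : DifferentiableOn ℂ (logDeriv F) (Metric.ball c R) := by
    refine DifferentiableOn.div ?_ hF.differentiableOn h0
    exact (hF.contDiff (n := 2)).differentiable_deriv_two.differentiableOn
  obtain ⟨l, hl0, hl⟩ := hd.isExactOn_ball.with_val_at c 0
  refine ⟨l, hl0, hl, fun z hz => ?_⟩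
  have hder : ∀ w ∈ Metric.ball c R, HasDerivAt (fun w => F w * Complex.exp (-l w)) 0 w := by
    intro w hw
    have := (hF w).hasDerivAt.mul ((hl w hw).fun_neg.cexp)
    refine this.congr_deriv ?_
    simp only [logDeriv_apply]
    have := h0 w hw
    field_simp
    ring
  have hc := Metric.isOpen_ball.is_const_of_deriv_eq_zero (convex_ball c R).isPreconnected
    (fun w hw => (hder w hw).differentiableAt.differentiableWithinAt)
    (fun w hw => (hder w hw).deriv) hz (Metric.mem_ball_self hR)
  simp only [hl0, neg_zero, Complex.exp_zero, mul_one] at hc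
  rw [← hc, mul_assoc, ← Complex.exp_add]
  simp

lemma zeta1_log_bounds (hRH : RiemannHypothesis) {h : ℝ} (h0 : 0 < h) (h1 : h ≤ 1 / 2) :
    ∃ A : ℝ, 0 < A ∧ ∀ s : ℂ, 1 / 2 + h ≤ s.re → s.re ≤ 2 →
      Real.exp (-(A * Real.log (|s.im| + 4))) ≤ ‖riemannZeta₁ s‖ ∧
      ‖logDeriv riemannZeta₁ s‖ ≤ A * Real.log (|s.im| + 4) := by
  refine ⟨120 / h ^ 2 + 2, by positivity, fun s hs1 hs2 => ?_⟩
  set c : ℂ := ⟨2, s.im⟩ with hc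
  set R : ℝ := 3 / 2 - h / 4 with hR
  have hRpos : 0 < R := by rw [hR]; linarith
  set Y := Real.log (|s.im| + 4) with hY
  have hY1 : 1 ≤ Y := by
    rw [hY, Real.le_log_iff_exp_le (by positivity)]
    have := Real.exp_one_lt_d9
    have := abs_nonneg s.im
    linarith
  have hre : ∀ z ∈ Metric.ball c R, 1 / 2 < z.re := by
    intro z hz
    rw [Metric.mem_ball, dist_eq_norm] at hz
    have := (Complex.abs_re_le_norm (z - c)).trans hz.le
    rw [abs_le] at this
    simp [hc] at this
    linarith [this.1]
  obtain ⟨l, hl0, hl, hexp⟩ := exists_log_ball hRpos differentiable_riemannZeta₁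
    (fun z hz => zeta1_ne_zero hRH (hre z hz))
  have hc4 : 1 / 4 ≤ ‖riemannZeta₁ c‖ := zeta1_lower (by simp [hc])
  have hM : ∀ z ∈ Metric.ball c R, (l z).re ≤ 5 * Y := by
    intro z hz
    have e := hexp z hz
    have e2 : ‖riemannZeta₁ z‖ = ‖riemannZeta₁ c‖ * Real.exp (l z).re := by
      rw [e, norm_mul, Complex.norm_exp]
    have e3 := zeta1_bound (s := z) (by linarith [hre z hz])
    have e4 : ‖z‖ ≤ |s.im| + 5 := by
      have : ‖z‖ ≤ ‖z - c‖ + ‖c‖ := by simpa using norm_add_le (z - c) c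
      have h5 : ‖c‖ ≤ 2 + |s.im| := by
        simpa [hc] using Complex.norm_le_abs_re_add_abs_im c
      rw [Metric.mem_ball, dist_eq_norm] at hz
      linarith
    have e5 : Real.exp (l z).re ≤ (|s.im| + 4) ^ 5 := by
      have h6 : Real.exp (l z).re * (1 / 4) ≤ 4 * (‖z‖ + 1) ^ 2 := by
        rw [e2] at e3
        refine le_trans ?_ e3
        rw [mul_comm]
        gcongr
      have h7 : 4 * (‖z‖ + 1) ^ 2 ≤ 4 * (|s.im| + 6) ^ 2 := by
        have : ‖z‖ + 1 ≤ |s.im| + 6 := by linarith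
        gcongr
      set u := |s.im| + 4 with hu
      have hu4 : 4 ≤ u := by have := abs_nonneg s.im; linarith
      have h8 : (|s.im| + 6) ^ 2 ≤ 9 / 4 * u ^ 2 := by
        have : |s.im| + 6 = u + 2 := by rw [hu]; ring
        rw [this]; nlinarith
      have h9 : 64 * u ^ 2 ≤ u ^ 5 := by
        have : (4:ℝ) ^ 3 ≤ u ^ 3 := by gcongr
        nlinarith [sq_nonneg u]
      nlinarith [sq_nonneg u]
    have := Real.log_le_log (Real.exp_pos _) e5
    rw [Real.log_exp, Real.log_pow] at this
    simpa using this
  -- Borel–Carathéodory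
  have hBC : ∀ z, ‖z - c‖ ≤ 3 / 2 - 3 * h / 4 → ‖l z‖ ≤ 30 * Y / h := by
    intro z hz
    have hz' : z - c ∈ Metric.ball (0:ℂ) R := by
      rw [mem_ball_zero_iff]; rw [hR]; linarith
    have hd : DifferentiableOn ℂ (fun w => l (w + c)) (Metric.ball 0 R) := by
      intro w hw
      have : w + c ∈ Metric.ball c R := by simpa [dist_eq_norm] using hw
      exact ((hl _ this).comp_add_const w c).differentiableAt.differentiableWithinAt
    have hm : Set.MapsTo (fun w => l (w + c)) (Metric.ball 0 R) {z | z.re ≤ 5 * Y} := by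
      intro w hw
      have : w + c ∈ Metric.ball c R := by simpa [dist_eq_norm] using hw
      exact hM _ this
    have := Complex.borelCaratheodory_zero (by positivity : 0 < 5 * Y) hd hm hRpos hz' (by simpa using hl0)
    simp only [sub_add_cancel] at this
    refine this.trans ?_
    have hden : h / 2 ≤ R - ‖z - c‖ := by rw [hR]; linarith
    calc 2 * (5 * Y) * ‖z - c‖ / (R - ‖z - c‖) ≤ 2 * (5 * Y) * (3 / 2) / (h / 2) := by
          gcongr; linarith
      _ = 30 * Y / h := by field_simp; ring
  have hsc : ‖s - c‖ ≤ 3 / 2 - h := by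
    have : s - c = ((s.re - 2 : ℝ) : ℂ) := by
      apply Complex.ext <;> simp [hc]
    rw [this, Complex.norm_real, Real.norm_eq_abs, abs_le]
    constructor <;> linarith
  have hsb : s ∈ Metric.ball c R := by
    rw [Metric.mem_ball, dist_eq_norm]; rw [hR]; linarith
  have hh : 30 * Y / h ≤ 120 / h ^ 2 * Y := by
    rw [div_mul_eq_mul_div, div_le_div_iff₀ h0 (by positivity)]
    nlinarith [mul_pos h0 (lt_of_lt_of_le zero_lt_one hY1)]
  constructor
  · rw [hexp s hsb, norm_mul, Complex.norm_exp]
    have h5 : -(30 * Y / h) ≤ (l s).re := by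
      have := (Complex.abs_re_le_norm (l s)).trans (hBC s (by linarith))
      exact (abs_le.1 this).1
    have h6 : Real.exp (-(2 * Y)) ≤ 1 / 4 := by
      have : Real.exp (-(2 * Y)) ≤ Real.exp (-(Real.log 4)) := by
        apply Real.exp_le_exp.2
        have : Real.log 4 ≤ Y := Real.log_le_log (by norm_num) (by linarith [abs_nonneg s.im])
        linarith
      rwa [Real.exp_neg (Real.log 4), Real.exp_log (by norm_num), ← one_div] at this
    calc Real.exp (-((120 / h ^ 2 + 2) * Y)) = Real.exp (-(2 * Y)) * Real.exp (-(120 / h ^ 2 * Y)) := by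
          rw [← Real.exp_add]; congr 1; ring
      _ ≤ 1 / 4 * Real.exp (l s).re := by
          gcongr; linarith
      _ ≤ _ := by gcongr
  · rw [← (hl s hsb).deriv]
    have hsub : ∀ z ∈ Metric.closedBall s (h / 4), ‖z - c‖ ≤ 3 / 2 - 3 * h / 4 := by
      intro z hz
      rw [Metric.mem_closedBall, dist_eq_norm] at hz
      have : ‖z - c‖ ≤ ‖z - s‖ + ‖s - c‖ := by simpa using norm_add_le (z - s) (s - c)
      linarith
    have hdc : DiffContOnCl ℂ l (Metric.ball s (h / 4)) := by
      apply DifferentiableOn.diffContOnCl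
      intro z hz
      have hz2 := hsub z (Metric.closure_ball_subset_closedBall hz)
      refine (hl z ?_).differentiableAt.differentiableWithinAt
      rw [Metric.mem_ball, dist_eq_norm, hR]; linarith
    have := Complex.norm_deriv_le_of_forall_mem_sphere_norm_le (by positivity : 0 < h / 4) hdc
      (fun z hz => hBC z (hsub z (Metric.sphere_subset_closedBall hz)))
    refine this.trans ?_
    have : 30 * Y / h / (h / 4) = 120 / h ^ 2 * Y := by field_simp; ring
    rw [this]; nlinarith

/-- the Riemann xi function (normalised so that it equals `s(s-1)Λ(s)`). -/
def xiF (s : ℂ) : ℂ := 1 - s * (1 - s) * completedRiemannZeta₀ s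

lemma xiF_diff : Differentiable ℂ xiF := by
  unfold xiF
  have := differentiable_completedZeta₀
  fun_prop

lemma xiF_one_sub (s : ℂ) : xiF (1 - s) = xiF s := by
  unfold xiF
  rw [completedRiemannZeta₀_one_sub]; ring

lemma xiF_eq {s : ℂ} (hs : 0 < s.re) : xiF s = s * riemannZeta₁ s * Complex.Gammaℝ s := by
  by_cases h1 : s = 1
  · subst h1; simp [xiF]
  have hs0 : s ≠ 0 := by rintro rfl; simp at hs
  rw [zeta1_of_ne h1, riemannZeta_def_of_ne_zero hs0]
  have hG := Complex.Gammaℝ_ne_zero_of_re_pos hs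
  have e := completedRiemannZeta_eq s
  have h2 : 1 - s ≠ 0 := sub_ne_zero.2 (Ne.symm h1)
  unfold xiF
  field_simp
  rw [e]
  field_simp
  ring

lemma gammaR_conj (s : ℂ) : Complex.Gammaℝ ((starRingEnd ℂ) s) = (starRingEnd ℂ) (Complex.Gammaℝ s) := by
  simp only [Complex.Gammaℝ_def, map_mul]
  have e1 : -(starRingEnd ℂ) s / 2 = (starRingEnd ℂ) (-s / 2) := by
    rw [map_div₀, map_neg, map_ofNat]
  have e2 : (starRingEnd ℂ) s / 2 = (starRingEnd ℂ) (s / 2) := by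
    rw [map_div₀, map_ofNat]
  have e3 : (Complex.arg (π : ℂ)) ≠ π := by
    rw [Complex.arg_ofReal_of_nonneg Real.pi_pos.le]; exact Real.pi_pos.ne
  rw [e1, e2, Complex.Gamma_conj, Complex.cpow_conj _ _ e3, Complex.conj_ofReal]

lemma xiF_conj_aux {s : ℂ} (hs : 0 < s.re) : xiF ((starRingEnd ℂ) s) = (starRingEnd ℂ) (xiF s) := by
  by_cases h1 : s = 1
  · subst h1; simp [xiF]
  have h1' : (starRingEnd ℂ) s ≠ 1 := by
    intro h; apply h1
    have := congrArg (starRingEnd ℂ) h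
    simpa using this
  rw [xiF_eq hs, xiF_eq (by simpa using hs), zeta1_of_ne h1, zeta1_of_ne h1', riemannZeta_conj, gammaR_conj]
  simp

lemma xiF_conj (s : ℂ) : xiF ((starRingEnd ℂ) s) = (starRingEnd ℂ) (xiF s) := by
  rcases lt_or_ge 0 s.re with h | h
  · exact xiF_conj_aux h
  · have := xiF_conj_aux (s := 1 - s) (by simp; linarith)
    rw [xiF_one_sub, map_sub, map_one, xiF_one_sub] at this
    exact this

lemma xiF_ne_zero (hRH : RiemannHypothesis) {s : ℂ} (hs : 1 / 2 < s.re) : xiF s ≠ 0 := by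
  rw [xiF_eq (by linarith)]
  refine mul_ne_zero (mul_ne_zero ?_ (zeta1_ne_zero hRH hs)) (Complex.Gammaℝ_ne_zero_of_re_pos (by linarith))
  rintro rfl; norm_num at hs

lemma xiF_reflect (h y : ℝ) :
    ‖xiF (1 / 2 + y * Complex.I - h)‖ = ‖xiF (1 / 2 + y * Complex.I + h)‖ := by
  have : (1 / 2 + y * Complex.I - h : ℂ) = 1 - (starRingEnd ℂ) (1 / 2 + y * Complex.I + h) := by
    apply Complex.ext <;> simp
    norm_num; ring
  rw [this, xiF_one_sub, xiF_conj, Complex.norm_conj]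

lemma gammaR_ratio {h : ℝ} (h0 : 0 < h) (h1 : h ≤ 1 / 4) :
    ∃ C : ℝ, 0 < C ∧ ∀ s : ℂ, 1 / 2 ≤ s.re →
      ‖Complex.Gammaℝ (s - h)‖ ≤ C * ‖Complex.Gammaℝ (s + h)‖ := by
  set J : ℝ := ∫ x in (0:ℝ)..1, x ^ ((1:ℝ) / 8 - 1) * (1 - x) ^ (h - 1) with hJ
  have hJi : IntervalIntegrable (fun x : ℝ => x ^ ((1:ℝ) / 8 - 1) * (1 - x) ^ (h - 1)) volume 0 1 := by
    have := (Complex.betaIntegral_convergent (u := ((1/8 : ℝ) : ℂ)) (v := (h:ℂ)) (by simp) (by simpa using h0)).norm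
    rw [intervalIntegrable_iff_integrableOn_Ioo_of_le zero_le_one] at this ⊢
    refine this.congr_fun (fun x hx => ?_) measurableSet_Ioo
    have hx1 : (0:ℝ) < 1 - x := by linarith [hx.2]
    simp only [norm_mul]
    rw [Complex.norm_cpow_eq_rpow_re_of_pos hx.1,
      show (1 - (x:ℂ)) = ((1 - x : ℝ) : ℂ) by push_cast; rfl, Complex.norm_cpow_eq_rpow_re_of_pos hx1]
    simp
  have hJ0 : 0 ≤ J := intervalIntegral.integral_nonneg zero_le_one fun x hx => by
    have := hx.1
    have : 0 ≤ 1 - x := by linarith [hx.2]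
    positivity
  have hGh : 0 < Real.Gamma h := Real.Gamma_pos_of_pos h0
  refine ⟨π ^ h * (J + 1) / Real.Gamma h, by positivity, fun s hs => ?_⟩
  have hG : ∀ u : ℂ, 1 / 8 ≤ u.re → ‖Complex.Gamma u‖ ≤ J / Real.Gamma h * ‖Complex.Gamma (u + h)‖ := by
    intro u hu
    have e := Complex.Gamma_mul_Gamma_eq_betaIntegral (s := u) (t := (h:ℂ)) (by linarith) (by simpa using h0)
    have hb : ‖Complex.betaIntegral u h‖ ≤ J := by
      unfold Complex.betaIntegral
      refine intervalIntegral.norm_integral_le_of_norm_le zero_le_one ?_ hJi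
      have : ∀ᵐ x : ℝ, x ≠ 1 := by simp [ae_iff, measure_singleton]
      filter_upwards [this] with x hx1 hx
      have hx2 : 0 < 1 - x := by
        have := lt_of_le_of_ne hx.2 hx1
        linarith
      rw [norm_mul, Complex.norm_cpow_eq_rpow_re_of_pos hx.1,
        show (1 - (x:ℂ)) = ((1 - x : ℝ) : ℂ) by push_cast; rfl, Complex.norm_cpow_eq_rpow_re_of_pos hx2]
      simp only [Complex.sub_re, Complex.one_re, Complex.ofReal_re]
      gcongr ?_ * _
      exact Real.rpow_le_rpow_of_exponent_ge hx.1 hx.2 (by linarith)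
    have hn := congrArg norm e
    rw [norm_mul, norm_mul, Complex.Gamma_ofReal, Complex.norm_real, Real.norm_of_nonneg hGh.le] at hn
    rw [div_mul_eq_mul_div, le_div_iff₀ hGh, hn, mul_comm]
    gcongr
  have h2 := hG ((s - h) / 2) (by simp; linarith)
  rw [show (s - h) / 2 + h = (s + h) / 2 by ring] at h2
  rw [Complex.Gammaℝ_def, Complex.Gammaℝ_def, norm_mul, norm_mul,
    Complex.norm_cpow_eq_rpow_re_of_pos Real.pi_pos, Complex.norm_cpow_eq_rpow_re_of_pos Real.pi_pos]
  have e3 : (-(s - h) / 2).re = h + (-(s + h) / 2).re := by simp; ring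
  rw [e3, Real.rpow_add Real.pi_pos]
  calc π ^ h * π ^ (-(s + h) / 2).re * ‖Complex.Gamma ((s - h) / 2)‖
      ≤ π ^ h * π ^ (-(s + h) / 2).re * (J / Real.Gamma h * ‖Complex.Gamma ((s + h) / 2)‖) := by gcongr
    _ ≤ π ^ h * π ^ (-(s + h) / 2).re * ((J + 1) / Real.Gamma h * ‖Complex.Gamma ((s + h) / 2)‖) := by
        gcongr; linarith
    _ = _ := by ring

/-- growth of the quotient `ξ(s-h)/ξ(s+h)`. -/
lemma xi_ratio (hRH : RiemannHypothesis) {h : ℝ} (h0 : 0 < h) (h1 : h ≤ 1 / 4) :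
    ∃ C B : ℝ, 0 < C ∧ 0 < B ∧ (∀ s : ℂ, 1 / 2 ≤ s.re →
      ‖xiF (s - h)‖ ≤ C * Real.exp (B * ‖s‖) * ‖xiF (s + h)‖) ∧
      ∀ s : ℂ, 3 ≤ s.re → ‖xiF (s - h)‖ ≤ C * ‖xiF (s + h)‖ := by
  obtain ⟨C, hC, hG⟩ := gammaR_ratio h0 h1
  obtain ⟨A, hA, hl⟩ := zeta1_log_bounds hRH h0 (by linarith)
  have hsn : ∀ s : ℂ, 1 / 2 ≤ s.re → ‖s - h‖ ≤ ‖s + h‖ := by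
    intro s hs
    rw [← sq_le_sq₀ (norm_nonneg _) (norm_nonneg _), Complex.sq_norm, Complex.sq_norm]
    simp only [Complex.normSq_apply, Complex.sub_re, Complex.add_re, Complex.sub_im, Complex.add_im, Complex.ofReal_re, Complex.ofReal_im]
    nlinarith
  refine ⟨C * (64 * Real.exp (5 * A + 4)), A + 2, by positivity, by positivity, fun s hs => ?_, fun s hs => ?_⟩
  · rw [xiF_eq (by simp; linarith), xiF_eq (by simp; linarith)]
    have hz : ‖riemannZeta₁ (s - h)‖ ≤ 64 * Real.exp (5 * A + 4) * Real.exp ((A + 2) * ‖s‖) * ‖riemannZeta₁ (s + h)‖ := by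
      have e1 := zeta1_bound (s := s - h) (by simp; linarith)
      have hns : ‖s - h‖ ≤ ‖s‖ + 1 := by
        refine (norm_sub_le _ _).trans ?_
        rw [Complex.norm_real, Real.norm_of_nonneg h0.le]; linarith
      have e2 : 4 * (‖s - h‖ + 1) ^ 2 ≤ 4 * Real.exp (2 * (‖s‖ + 2)) := by
        have : ‖s - h‖ + 1 ≤ Real.exp (‖s‖ + 2) := by
          have := Real.add_one_le_exp (‖s‖ + 2); linarith
        calc 4 * (‖s - h‖ + 1) ^ 2 ≤ 4 * Real.exp (‖s‖ + 2) ^ 2 := by gcongr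
          _ = _ := by rw [← Real.exp_nat_mul]; norm_num
      have e3 : 1 / 4 * Real.exp (-(A * (‖s‖ + 5))) ≤ ‖riemannZeta₁ (s + h)‖ := by
        rcases le_total (s + h).re 2 with h2 | h2
        · have := (hl (s + h) (by simp; linarith) h2).1
          refine le_trans ?_ this
          have h5 : Real.log (|(s + h).im| + 4) ≤ ‖s‖ + 5 := by
            have := Real.log_le_sub_one_of_pos (x := |(s + h).im| + 4) (by positivity)
            have h6 := Complex.abs_im_le_norm s
            simp at this ⊢
            linarith
          have : Real.exp (-(A * (‖s‖ + 5))) ≤ Real.exp (-(A * Real.log (|(s + h).im| + 4))) := by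
            apply Real.exp_le_exp.2
            nlinarith
          linarith [Real.exp_pos (-(A * (‖s‖ + 5)))]
        · have := zeta1_lower h2
          refine le_trans ?_ this
          have : Real.exp (-(A * (‖s‖ + 5))) ≤ 1 := Real.exp_le_one_iff.2 (by
            have := norm_nonneg s
            have : 0 ≤ A * (‖s‖ + 5) := by positivity
            linarith)
          linarith
      calc ‖riemannZeta₁ (s - h)‖ ≤ 4 * Real.exp (2 * (‖s‖ + 2)) := e1.trans e2
        _ = 16 * Real.exp (5 * A + 4) * Real.exp ((A + 2) * ‖s‖) * (1 / 4 * Real.exp (-(A * (‖s‖ + 5)))) := by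
            have : Real.exp (2 * (‖s‖ + 2)) = Real.exp (5 * A + 4) * Real.exp ((A + 2) * ‖s‖) * Real.exp (-(A * (‖s‖ + 5))) := by
              rw [← Real.exp_add, ← Real.exp_add]; congr 1; ring
            rw [this]; ring
        _ ≤ 16 * Real.exp (5 * A + 4) * Real.exp ((A + 2) * ‖s‖) * ‖riemannZeta₁ (s + h)‖ := by gcongr
        _ ≤ _ := by gcongr; norm_num
    rw [norm_mul, norm_mul, norm_mul, norm_mul]
    calc ‖s - h‖ * ‖riemannZeta₁ (s - h)‖ * ‖Complex.Gammaℝ (s - h)‖ ≤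
        ‖s + h‖ * (64 * Real.exp (5 * A + 4) * Real.exp ((A + 2) * ‖s‖) * ‖riemannZeta₁ (s + h)‖) * (C * ‖Complex.Gammaℝ (s + h)‖) := by
          gcongr
          · exact hsn s hs
          · exact hG s hs
      _ = _ := by ring
  · rw [xiF_eq (by simp; linarith), xiF_eq (by simp; linarith)]
    have hm1 : s - h ≠ 1 := by
      intro hh; have := congrArg Complex.re hh; simp at this; linarith
    have hm2 : s + h ≠ 1 := by
      intro hh; have := congrArg Complex.re hh; simp at this; linarith
    have e1 := zeta_sub_one_le (s := s - h) (by simp; linarith)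
    have e2 := zeta_sub_one_le (s := s + h) (by simp; linarith)
    have e1' : ‖riemannZeta (s - h)‖ ≤ 2 := by
      have := norm_add_le (riemannZeta (s - h) - 1) 1
      simp at this; linarith
    have e2' : 1 / 4 ≤ ‖riemannZeta (s + h)‖ := by
      have := norm_sub_norm_le (1:ℂ) (1 - riemannZeta (s + h))
      rw [norm_sub_rev 1] at this
      simp at this
      linarith
    have hz : ‖riemannZeta₁ (s - h)‖ ≤ 8 * ‖riemannZeta₁ (s + h)‖ := by
      rw [zeta1_of_ne hm1, zeta1_of_ne hm2, norm_mul, norm_mul]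
      have := hsn (s - 1) (by simp; linarith)
      rw [show s - 1 - h = s - h - 1 by ring, show s - 1 + h = s + h - 1 by ring] at this
      calc ‖s - h - 1‖ * ‖riemannZeta (s - h)‖ ≤ ‖s + h - 1‖ * (8 * ‖riemannZeta (s + h)‖) := by
            gcongr; linarith
        _ = _ := by ring
    have h64 : 8 ≤ 64 * Real.exp (5 * A + 4) := by
      have := Real.one_le_exp (x := 5 * A + 4) (by positivity)
      linarith
    rw [norm_mul, norm_mul, norm_mul, norm_mul]
    calc ‖s - h‖ * ‖riemannZeta₁ (s - h)‖ * ‖Complex.Gammaℝ (s - h)‖ ≤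
        ‖s + h‖ * (64 * Real.exp (5 * A + 4) * ‖riemannZeta₁ (s + h)‖) * (C * ‖Complex.Gammaℝ (s + h)‖) := by
          gcongr
          · exact hsn s (by linarith)
          · exact hz.trans (by gcongr)
          · exact hG s (by linarith)
      _ = _ := by ring

lemma re_logDeriv_le {f : ℂ → ℂ} {s : ℂ} (hf : DifferentiableAt ℂ f s) (h0 : f s ≠ 0) {A r : ℝ} (hr : 0 < r)
    (h : ∀ x : ℝ, 0 < x → x < r → ‖f (s + x)‖ ≤ ‖f s‖ * Real.exp (A * x)) :
    (logDeriv f s).re ≤ A := by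
  have h1 : HasDerivAt (fun x : ℝ => f (s + x)) (deriv f s) 0 := by
    have e : HasDerivAt (fun z : ℂ => f (s + z)) (deriv f s) (0:ℝ) := by
      have := hf.hasDerivAt
      have h2 : HasDerivAt f (deriv f s) (s + ((0:ℝ):ℂ)) := by simpa using this
      simpa using h2.comp_const_add s ((0:ℝ):ℂ)
    exact e.comp_ofReal
  have h2 : HasDerivAt (fun x : ℝ => ‖f (s + x)‖ ^ 2) (2 * inner ℝ (f s) (deriv f s)) 0 := by
    have := h1.norm_sq
    simpa using this
  have h3 : HasDerivAt (fun x : ℝ => ‖f s‖ ^ 2 * Real.exp (2 * A * x)) (‖f s‖ ^ 2 * (2 * A)) 0 := by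
    have := ((Real.hasDerivAt_exp (2 * A * 0)).comp (0:ℝ) ((hasDerivAt_id (0:ℝ)).const_mul (2 * A))).const_mul (‖f s‖ ^ 2)
    simpa [Function.comp_def] using this
  have h4 := h3.sub h2
  have h5 : 0 ≤ ‖f s‖ ^ 2 * (2 * A) - 2 * inner ℝ (f s) (deriv f s) := by
    have h6 := h4.tendsto_slope_zero_right
    refine ge_of_tendsto h6 ?_
    have : ∀ᶠ x : ℝ in nhdsWithin 0 (Set.Ioi 0), x ∈ Set.Ioo 0 r := Ioo_mem_nhdsGT hr
    filter_upwards [this] with x hx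
    have := h x hx.1 hx.2
    have h7 : ‖f (s + x)‖ ^ 2 ≤ ‖f s‖ ^ 2 * Real.exp (2 * A * x) := by
      calc ‖f (s + x)‖ ^ 2 ≤ (‖f s‖ * Real.exp (A * x)) ^ 2 := by gcongr
        _ = _ := by rw [mul_pow, ← Real.exp_nat_mul]; push_cast; ring_nf
    have h8 : 0 < x⁻¹ := inv_pos.2 hx.1
    simp only [smul_eq_mul, Pi.sub_apply, zero_add, mul_zero, Real.exp_zero, mul_one, Complex.ofReal_zero, add_zero]
    apply mul_nonneg h8.le
    linarith
  have h6 : (logDeriv f s).re * ‖f s‖ ^ 2 = inner ℝ (f s) (deriv f s) := by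
    rw [logDeriv_apply, Complex.inner, Complex.div_re, ← Complex.normSq_eq_norm_sq]
    have : Complex.normSq (f s) ≠ 0 := by simpa using h0
    field_simp
    simp
  have h9 : 0 < ‖f s‖ ^ 2 := by positivity
  rw [← h6] at h5
  nlinarith

/-- class of functions to which the positivity argument applies -/
structure QC (g : ℂ → ℂ) : Prop where
  diff : Differentiable ℂ g
  ne : ∀ s : ℂ, 1 / 2 < s.re → g s ≠ 0
  refl : ∀ h y : ℝ, 0 < h → ‖g (1 / 2 + y * Complex.I - h)‖ = ‖g (1 / 2 + y * Complex.I + h)‖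
  growth : ∀ h : ℝ, 0 < h → h ≤ 1 / 4 → ∃ C B R : ℝ, 0 < C ∧ (∀ s : ℂ, 1 / 2 ≤ s.re → R ≤ ‖s‖ →
      ‖g (s - h)‖ ≤ C * Real.exp (B * ‖s‖) * ‖g (s + h)‖) ∧
      ∀ s : ℂ, 3 ≤ s.re → R ≤ ‖s‖ → ‖g (s - h)‖ ≤ C * ‖g (s + h)‖

lemma QC_xi (hRH : RiemannHypothesis) : QC xiF where
  diff := xiF_diff
  ne := fun s hs => xiF_ne_zero hRH hs
  refl := fun h y _ => xiF_reflect h y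
  growth := fun h h0 h1 => by
    obtain ⟨C, B, hC, hB, h2, h3⟩ := xi_ratio hRH h0 h1
    exact ⟨C, B, 0, hC, fun s hs _ => h2 s hs, fun s hs _ => h3 s hs⟩

lemma QC_div {g f : ℂ → ℂ} (hf : QC f) (γ : ℝ) (hg : Differentiable ℂ g)
    (e : ∀ s, f s = (s - (1 / 2 + γ * Complex.I)) * g s) : QC g where
  diff := hg
  ne := fun s hs h => hf.ne s hs (by rw [e, h, mul_zero])
  refl := fun h y h0 => by
    have := hf.refl h y h0
    rw [e, e, norm_mul, norm_mul] at this
    have e2 : ‖1 / 2 + (y:ℂ) * Complex.I - h - (1 / 2 + γ * Complex.I)‖ = ‖1 / 2 + (y:ℂ) * Complex.I + h - (1 / 2 + γ * Complex.I)‖ := by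
      rw [← sq_eq_sq₀ (norm_nonneg _) (norm_nonneg _), Complex.sq_norm, Complex.sq_norm]
      simp [Complex.normSq_apply]
    have e3 : ‖1 / 2 + (y:ℂ) * Complex.I + h - (1 / 2 + γ * Complex.I)‖ ≠ 0 := by
      intro h2
      have := congrArg Complex.re (norm_eq_zero.1 h2)
      simp at this
      exact h0.ne' this
    rw [e2] at this
    exact mul_left_cancel₀ e3 this
  growth := fun h h0 h1 => by
    obtain ⟨C, B, R, hC, h2, h3⟩ := hf.growth h h0 h1
    set ρ : ℂ := 1 / 2 + γ * Complex.I with hρ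
    have key : ∀ s : ℂ, max R (‖ρ‖ + 1) ≤ ‖s‖ → ∀ D : ℝ, 0 ≤ D → ‖f (s - h)‖ ≤ D * ‖f (s + h)‖ → ‖g (s - h)‖ ≤ 2 * D * ‖g (s + h)‖ := by
      intro s hs D hD hh
      rw [e, e, norm_mul, norm_mul] at hh
      have hs1 : ‖ρ‖ + 1 ≤ ‖s‖ := le_trans (le_max_right _ _) hs
      have h4 : 3 / 4 ≤ ‖s - h - ρ‖ := by
        have := norm_sub_norm_le s (h + ρ)
        have h5 := norm_add_le (h:ℂ) ρ
        rw [Complex.norm_real, Real.norm_of_nonneg h0.le] at h5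
        rw [show s - h - ρ = s - (h + ρ) by ring]
        linarith
      have h5 : ‖s + h - ρ‖ ≤ 2 * ‖s - h - ρ‖ := by
        have h5 := norm_add_le (s - h - ρ) (2 * h)
        rw [norm_mul, Complex.norm_real, Real.norm_of_nonneg h0.le, show s - h - ρ + 2 * h = s + h - ρ by ring] at h5
        simp at h5
        linarith
      have h6 : ‖s - h - ρ‖ * ‖g (s - h)‖ ≤ ‖s - h - ρ‖ * (2 * D * ‖g (s + h)‖) := by
        calc _ ≤ _ := hh
          _ ≤ D * ((2 * ‖s - h - ρ‖) * ‖g (s + h)‖) := by gcongr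
          _ = _ := by ring
      exact le_of_mul_le_mul_left h6 (by linarith)
    refine ⟨2 * C, B, max R (‖ρ‖ + 1), by positivity, fun s hs hR => ?_, fun s hs hR => ?_⟩
    · have := key s hR _ (by positivity) (h2 s hs (le_trans (le_max_left _ _) hR))
      linarith
    · exact key s hR _ (by positivity) (h3 s hs (le_trans (le_max_left _ _) hR))

lemma QC_mono {g : ℂ → ℂ} (hg : QC g) {s : ℂ} (hs : 1 / 2 < s.re) {h : ℝ} (h0 : 0 < h) (h1 : h ≤ 1 / 4) :
    ‖g s‖ ≤ ‖g (s + 2 * h)‖ := by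
  obtain ⟨C, B, R, hC, h2, h3⟩ := hg.growth h h0 h1
  set Φ : ℂ → ℂ := fun z => g (1 / 2 + z - h) / g (1 / 2 + z + h) with hΦ
  have hne : ∀ z : ℂ, 0 ≤ z.re → g (1 / 2 + z + h) ≠ 0 := fun z hz => hg.ne _ (by simp; linarith)
  have hle : ∀ z : ℂ, 0 ≤ z.re → ∀ D : ℝ, ‖g (1 / 2 + z - h)‖ ≤ D * ‖g (1 / 2 + z + h)‖ → ‖Φ z‖ ≤ D := by
    intro z hz D h
    rw [hΦ]; simp only [norm_div]
    rwa [div_le_iff₀ (norm_pos_iff.2 (hne z hz))]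
  have hb : ‖Φ (s + h - 1 / 2)‖ ≤ 1 := by
    apply PhragmenLindelof.right_half_plane_of_bounded_on_real (f := Φ)
    · apply DifferentiableOn.diffContOnCl
      rw [Complex.closure_setOfPred_lt_re]
      intro z hz
      have hd := hg.diff
      refine DifferentiableAt.differentiableWithinAt ?_
      exact DifferentiableAt.div (by fun_prop) (by fun_prop) (hne z hz)
    · refine ⟨1, by norm_num, |B|, ?_⟩
      apply Asymptotics.IsBigO.of_bound (C * Real.exp (|B| * (1/2)))
      have : ∀ᶠ z : ℂ in Bornology.cobounded ℂ, R + 1 ≤ ‖z‖ :=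
        (tendsto_norm_cobounded_atTop (E := ℂ)).eventually_ge_atTop (R + 1)
      filter_upwards [this.filter_mono inf_le_left, mem_inf_of_right (mem_principal_self _)] with z hz hz2
      have hz2 : 0 < z.re := hz2
      have h4 : R ≤ ‖1 / 2 + z‖ := by
        have := norm_sub_norm_le z (-(1/2 : ℂ))
        simp at this
        rw [show 1 / 2 + z = z + 2⁻¹ by ring]
        linarith
      have h5 : ‖1 / 2 + z‖ ≤ 1 / 2 + ‖z‖ := by
        have := norm_add_le (1 / 2 : ℂ) z
        simpa using this
      refine hle z hz2.le _ ((h2 _ (by simp; linarith) h4).trans ?_)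
      rw [Real.norm_of_nonneg (Real.exp_nonneg _), Real.rpow_one, mul_assoc C (Real.exp _) (Real.exp _), ← Real.exp_add]
      gcongr
      calc B * ‖1 / 2 + z‖ ≤ |B| * ‖1 / 2 + z‖ := by gcongr; exact le_abs_self B
        _ ≤ |B| * (1 / 2 + ‖z‖) := by gcongr
        _ = _ := by ring
    · refine ⟨C, ?_⟩
      rw [eventually_map]
      filter_upwards [eventually_ge_atTop 3, eventually_ge_atTop R] with x hx hxR
      refine hle _ (by simp; linarith) _ (h3 _ (by simp; linarith) ?_)
      rw [show (1 / 2 + (x:ℂ)) = ((1 / 2 + x : ℝ) : ℂ) by push_cast; ring, Complex.norm_real, Real.norm_of_nonneg (by linarith)]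
      linarith
    · intro x
      refine hle _ (by simp) _ ?_
      rw [hg.refl h x h0, one_mul]
    · simp; linarith
  have hp : 0 < ‖g (s + 2 * h)‖ := norm_pos_iff.2 (hg.ne _ (by simp; linarith))
  simp only [hΦ, norm_div] at hb
  rw [show 1 / 2 + (s + h - 1 / 2) - h = s by ring, show 1 / 2 + (s + h - 1 / 2) + h = s + 2 * h by ring, div_le_one hp] at hb
  exact hb

lemma QC_nonneg {g : ℂ → ℂ} (hg : QC g) {s : ℂ} (hs : 1 / 2 < s.re) : 0 ≤ (logDeriv g s).re := by
  have := re_logDeriv_le (f := fun z => (g z)⁻¹) (s := s) (A := 0) (r := 1 / 2) ((hg.diff s).inv (hg.ne s hs)) (inv_ne_zero (hg.ne s hs)) (by norm_num) (by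
    intro x hx hx1
    have h := QC_mono hg hs (h := x / 2) (by linarith) (by linarith)
    rw [show s + 2 * ((x / 2 : ℝ) : ℂ) = s + x by push_cast; ring] at h
    simp only [norm_inv, zero_mul, Real.exp_zero, mul_one]
    exact inv_anti₀ (norm_pos_iff.2 (hg.ne s hs)) h)
  have e : logDeriv (fun z => (g z)⁻¹) s = - logDeriv g s := by
    rw [logDeriv_apply, logDeriv_apply, deriv_fun_inv'' (hg.diff s) (hg.ne s hs)]
    have := hg.ne s hs
    field_simp
  rw [e] at this
  simp at this
  exact this

lemma QC_order {f : ℂ → ℂ} (hf : QC f) {γ : ℝ} {n : ℕ}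
    (h : ((n + 1 : ℕ) : ℕ∞) ≤ analyticOrderAt f (1 / 2 + γ * Complex.I)) :
    ∃ g, QC g ∧ (∀ s, f s = (s - (1 / 2 + γ * Complex.I)) * g s) ∧
      (n : ℕ∞) ≤ analyticOrderAt g (1 / 2 + γ * Complex.I) ∧
      ∀ z, z ≠ 1 / 2 + γ * Complex.I → analyticOrderAt g z = analyticOrderAt f z := by
  set ρ : ℂ := 1 / 2 + γ * Complex.I with hρ
  have h0 : f ρ = 0 := by
    apply apply_eq_zero_of_analyticOrderAt_ne_zero
    intro h1
    rw [h1] at h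
    simp at h
  have hd : Differentiable ℂ (dslope f ρ) := by
    rw [← differentiableOn_univ, Complex.differentiableOn_dslope univ_mem]
    exact hf.diff.differentiableOn
  have e : ∀ s, f s = (s - ρ) * dslope f ρ s := by
    intro s
    have := sub_smul_dslope f ρ s
    rw [h0, sub_zero, smul_eq_mul] at this
    exact this.symm
  have hm : ∀ z, analyticOrderAt f z = analyticOrderAt (fun s => s - ρ) z + analyticOrderAt (dslope f ρ) z := by
    intro z
    rw [← analyticOrderAt_mul (by fun_prop) (hd.analyticAt z)]
    congr 1
    funext s; exact e s
  refine ⟨dslope f ρ, QC_div hf γ hd e, e, ?_, fun z hz => ?_⟩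
  · have h1 := hm ρ
    have h2 : analyticOrderAt (fun s => s - ρ) ρ = 1 := by
      apply AnalyticAt.analyticOrderAt_eq_one_of_zero_deriv_ne_zero (by fun_prop) (by simp)
      simp
    rw [h1, h2, add_comm 1] at h
    push_cast at h
    exact (ENat.add_le_add_iff_right (by simp)).1 h
  · have h1 := hm z
    have h2 : analyticOrderAt (fun s => s - ρ) z = 0 := by
      rw [analyticOrderAt_eq_zero]; right
      exact sub_ne_zero.2 hz
    rw [h1, h2, zero_add]

lemma QC_sum (n : ℝ → ℕ) (S : Finset ℝ) : ∀ f : ℂ → ℂ, QC f →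
    (∀ γ ∈ S, (n γ : ℕ∞) ≤ analyticOrderAt f (1 / 2 + γ * Complex.I)) → ∀ s : ℂ, 1 / 2 < s.re →
    ∑ γ ∈ S, (n γ : ℝ) * ((s - (1 / 2 + γ * Complex.I))⁻¹).re ≤ (logDeriv f s).re := by
  induction S using Finset.induction_on with
  | empty => intro f hf _ s hs; simpa using QC_nonneg hf hs
  | insert a S ha ih =>
    intro f hf h s hs
    rw [Finset.sum_insert ha]
    have key : ∀ j : ℕ, ∀ f : ℂ → ℂ, QC f → ((j : ℕ∞) ≤ analyticOrderAt f (1 / 2 + a * Complex.I)) →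
        (∀ γ ∈ S, (n γ : ℕ∞) ≤ analyticOrderAt f (1 / 2 + γ * Complex.I)) →
        (j : ℝ) * ((s - (1 / 2 + a * Complex.I))⁻¹).re + ∑ γ ∈ S, (n γ : ℝ) * ((s - (1 / 2 + γ * Complex.I))⁻¹).re ≤ (logDeriv f s).re := by
      intro j
      induction j with
      | zero => intro f hf _ h2; simpa using ih f hf h2 s hs
      | succ j ihj =>
        intro f hf h1 h2
        obtain ⟨g, hg, e, h3, h4⟩ := QC_order hf h1
        have h5 := ihj g hg h3 (by
          intro γ hγ
          rw [h4 _ (by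
            intro hh
            have : γ = a := by simpa using congrArg Complex.im hh
            exact ha (this ▸ hγ))]
          exact h2 γ hγ)
        have hne : s - (1 / 2 + a * Complex.I) ≠ 0 := by
          intro hh
          have := congrArg Complex.re hh
          simp at this; linarith
        have h6 : logDeriv f s = (s - (1 / 2 + a * Complex.I))⁻¹ + logDeriv g s := by
          have : f = fun s => (s - (1 / 2 + a * Complex.I)) * g s := funext e
          rw [this, logDeriv_mul s hne (hg.ne s hs) (by fun_prop) (hg.diff s)]
          congr 1
          rw [logDeriv_apply]; simp
        rw [h6, Complex.add_re]
        push_cast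
        linarith
    exact key (n a) f hf (h a (Finset.mem_insert_self _ _)) (fun γ hγ => h γ (Finset.mem_insert_of_mem hγ))

lemma gammaR_diff {s : ℂ} (hs : 0 < s.re) : DifferentiableAt ℂ Complex.Gammaℝ s := by
  have h1 : Complex.Gammaℝ = fun s : ℂ => (π : ℂ) ^ (-s / 2) * Complex.Gamma (s / 2) := by
    funext s; rw [Complex.Gammaℝ_def]
  rw [h1]
  have h2 : DifferentiableAt ℂ (fun s : ℂ => (π : ℂ) ^ (-s / 2)) s := by
    apply DifferentiableAt.const_cpow (by fun_prop)
    left; exact_mod_cast Real.pi_pos.ne'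
  have h3 : DifferentiableAt ℂ (fun s : ℂ => Complex.Gamma (s / 2)) s := by
    apply DifferentiableAt.comp s (g := Complex.Gamma)
    · apply Complex.differentiableAt_Gamma
      intro m hm
      have := congrArg Complex.re hm
      simp at this
      have : (0:ℝ) ≤ m := by positivity
      linarith
    · fun_prop
  exact h2.mul h3

lemma ordMult_le (γ : ℝ) : (ordMult γ : ℕ∞) ≤ analyticOrderAt xiF (1 / 2 + γ * Complex.I) := by
  set ρ : ℂ := 1 / 2 + γ * Complex.I with hρ
  have hre : ρ.re = 1 / 2 := by simp [hρ]
  have hne : ρ ≠ 1 := by intro h; rw [h] at hre; norm_num at hre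
  have hζ : AnalyticAt ℂ riemannZeta ρ := by
    apply DifferentiableOn.analyticAt (s := {1}ᶜ)
    · intro z hz; exact (differentiableAt_riemannZeta hz).differentiableWithinAt
    · exact isOpen_compl_singleton.mem_nhds hne
  have h1 : (ordMult γ : ℕ∞) ≤ analyticOrderAt riemannZeta ρ := by
    rw [natCast_le_analyticOrderAt_iff_iteratedDeriv_eq_zero hζ]
    intro i hi
    have := Nat.notMem_of_lt_sInf (s := {n : ℕ | iteratedDeriv n riemannZeta ρ ≠ 0}) hi
    simpa using this
  have hop : IsOpen {s : ℂ | 0 < s.re} := isOpen_lt continuous_const Complex.continuous_re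
  have hρm : ρ ∈ {s : ℂ | 0 < s.re} := by simp [hre]
  have hG : AnalyticAt ℂ (fun s => s * (s - 1) * Complex.Gammaℝ s) ρ := by
    have : AnalyticAt ℂ Complex.Gammaℝ ρ := by
      apply DifferentiableOn.analyticAt (s := {s : ℂ | 0 < s.re})
      · intro z hz; exact (gammaR_diff hz).differentiableWithinAt
      · exact hop.mem_nhds hρm
    fun_prop
  have h2 : xiF =ᶠ[nhds ρ] (fun s => s * (s - 1) * Complex.Gammaℝ s) * riemannZeta := by
    filter_upwards [hop.mem_nhds hρm, isOpen_compl_singleton.mem_nhds hne] with s hs hs1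
    rw [xiF_eq hs, zeta1_of_ne hs1, Pi.mul_apply]; ring
  rw [analyticOrderAt_congr h2, analyticOrderAt_mul hG hζ]
  exact h1.trans le_add_self

lemma sum_inv_sq_le (n : ℕ) : ∑ j ∈ Finset.range (n + 1), (1:ℝ) / ((j:ℝ) + 1) ^ 2 ≤ 2 - 1 / ((n:ℝ) + 1) := by
  induction n with
  | zero => norm_num
  | succ n ih =>
    rw [Finset.sum_range_succ]
    push_cast
    have hn : (0:ℝ) ≤ n := by positivity
    have : 1 / ((n:ℝ) + 1 + 1) ^ 2 ≤ 1 / ((n:ℝ) + 1) - 1 / ((n:ℝ) + 1 + 1) := by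
      rw [div_sub_div _ _ (by positivity) (by positivity), div_le_div_iff₀ (by positivity) (by positivity)]
      nlinarith
    linarith

lemma gamma_sum_lower {x y h : ℝ} (hx : 0 < x) (hh : 0 < h) (hxh : x + h ≤ 1) (n : ℕ) :
    Real.log (n + 1) - 3 - 1 / 2 * Real.log (1 + y ^ 2) ≤
      ∑ j ∈ Finset.range (n + 1), (x + j) / ((x + h + j) ^ 2 + y ^ 2) := by
  have h1 : ∀ j : ℕ, 1 / 2 * Real.log (((j + 1 : ℕ) + 1 : ℝ) ^ 2 + y ^ 2) - 1 / 2 * Real.log (((j:ℝ) + 1) ^ 2 + y ^ 2) -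
      3 / 2 * (1 / ((j:ℝ) + 1) ^ 2) ≤ (x + j) / ((x + h + j) ^ 2 + y ^ 2) := by
    intro j
    have hj : (0:ℝ) ≤ j := by positivity
    have hp : 0 < ((j:ℝ) + 1) ^ 2 + y ^ 2 := by positivity
    have a1 : (j:ℝ) / (((j:ℝ) + 1) ^ 2 + y ^ 2) ≤ (x + j) / ((x + h + j) ^ 2 + y ^ 2) := by
      have b : (x + h + j) ^ 2 ≤ ((j:ℝ) + 1) ^ 2 := by
        apply pow_le_pow_left₀ (by positivity); linarith
      apply div_le_div₀ (by positivity) (by linarith) (by positivity) (by linarith)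
    have a2 : Real.log ((((j + 1 : ℕ) + 1 : ℝ) ^ 2 + y ^ 2) / (((j:ℝ) + 1) ^ 2 + y ^ 2)) ≤ (2 * j + 3) / (((j:ℝ) + 1) ^ 2 + y ^ 2) := by
      refine (Real.log_le_sub_one_of_pos (by positivity)).trans ?_
      rw [div_sub_one hp.ne']
      gcongr
      push_cast
      nlinarith
    rw [Real.log_div (by positivity) (by positivity)] at a2
    have a3 : 3 / (((j:ℝ) + 1) ^ 2 + y ^ 2) ≤ 3 * (1 / ((j:ℝ) + 1) ^ 2) := by
      rw [mul_one_div]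
      gcongr
      nlinarith [sq_nonneg y]
    rw [add_div] at a2
    have : 2 * (j:ℝ) / (((j:ℝ) + 1) ^ 2 + y ^ 2) = 2 * ((j:ℝ) / (((j:ℝ) + 1) ^ 2 + y ^ 2)) := by ring
    linarith
  have h2 := Finset.sum_le_sum (fun j (_ : j ∈ Finset.range (n + 1)) => h1 j)
  rw [Finset.sum_sub_distrib, Finset.sum_range_sub (fun j : ℕ => 1 / 2 * Real.log (((j:ℝ) + 1) ^ 2 + y ^ 2)), ← Finset.mul_sum] at h2
  have h3 := sum_inv_sq_le n
  have h4 : Real.log (n + 1) ≤ 1 / 2 * Real.log ((((n + 1 : ℕ) : ℝ) + 1) ^ 2 + y ^ 2) := by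
    have : Real.log (((n:ℝ) + 1) ^ 2) ≤ Real.log ((((n + 1 : ℕ) : ℝ) + 1) ^ 2 + y ^ 2) := by
      apply Real.log_le_log (by positivity)
      push_cast
      nlinarith [sq_nonneg y, Nat.cast_nonneg (α := ℝ) n]
    rw [Real.log_pow] at this
    push_cast at this ⊢
    linarith
  have h5 : (0:ℝ) ≤ 1 / ((n:ℝ) + 1) := by positivity
  simp only [Nat.cast_zero, zero_add, one_pow] at h2
  linarith

lemma gamma_shift {u : ℂ} {h : ℝ} (hu : 0 < u.re) (hh : 0 < h) (huh : u.re + h ≤ 1) :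
    ‖Complex.Gamma (u + h)‖ ≤ ‖Complex.Gamma u‖ * Real.exp ((3 + 1 / 2 * Real.log (1 + u.im ^ 2)) * h) := by
  have t1 := (Complex.GammaSeq_tendsto_Gamma (u + h)).norm
  have t2 := ((Complex.GammaSeq_tendsto_Gamma u).norm).mul_const (Real.exp ((3 + 1 / 2 * Real.log (1 + u.im ^ 2)) * h))
  refine le_of_tendsto_of_tendsto t1 t2 ?_
  filter_upwards [eventually_ge_atTop 1] with n hn
  have hn0 : (0:ℝ) < n := by exact_mod_cast hn
  have hf : ∀ j : ℕ, ‖u + j‖ ≤ ‖u + h + j‖ * Real.exp (-(h * ((u.re + j) / ((u.re + h + j) ^ 2 + u.im ^ 2)))) := by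
    intro j
    have hj : (0:ℝ) ≤ j := by positivity
    rw [← sq_le_sq₀ (norm_nonneg _) (by positivity), mul_pow, Complex.sq_norm, Complex.sq_norm, ← Real.exp_nat_mul]
    simp only [Complex.normSq_apply, Complex.add_re, Complex.add_im, Complex.natCast_re, Complex.natCast_im, Complex.ofReal_re, Complex.ofReal_im, add_zero]
    set D := (u.re + h + j) ^ 2 + u.im ^ 2 with hD
    have hDp : 0 < D := by positivity
    have e := Real.add_one_le_exp (((2:ℕ):ℝ) * -(h * ((u.re + j) / D)))
    have : (u.re + j) * (u.re + j) + u.im * u.im ≤ D * (((2:ℕ):ℝ) * -(h * ((u.re + j) / D)) + 1) := by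
      have e2 : D * (((2:ℕ):ℝ) * -(h * ((u.re + j) / D)) + 1) = D - 2 * h * (u.re + j) := by
        field_simp; push_cast; ring
      rw [e2, hD]; nlinarith
    rw [show (u.re + h + j) * (u.re + h + j) + u.im * u.im = D by rw [hD]; ring]
    exact this.trans (by gcongr)
  have hprod : ∏ j ∈ Finset.range (n + 1), ‖u + j‖ ≤ (∏ j ∈ Finset.range (n + 1), ‖u + h + j‖) *
      Real.exp (-(h * ∑ j ∈ Finset.range (n + 1), (u.re + j) / ((u.re + h + j) ^ 2 + u.im ^ 2))) := by
    rw [Finset.mul_sum, ← Finset.sum_neg_distrib, Real.exp_sum, ← Finset.prod_mul_distrib]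
    exact Finset.prod_le_prod (fun _ _ => norm_nonneg _) (fun j _ => hf j)
  have hl := gamma_sum_lower (y := u.im) hu hh huh n
  have hlog : Real.log n ≤ Real.log (n + 1) := Real.log_le_log hn0 (by linarith)
  simp only [Complex.GammaSeq, norm_div, norm_mul, norm_prod]
  rw [show (n:ℂ) = ((n:ℝ):ℂ) by push_cast; rfl, Complex.norm_cpow_eq_rpow_re_of_pos hn0, Complex.norm_cpow_eq_rpow_re_of_pos hn0]
  simp only [Complex.add_re, Complex.ofReal_re]
  rw [Real.rpow_add hn0, Real.rpow_def_of_pos hn0 h]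
  have hp1 : 0 < ∏ j ∈ Finset.range (n + 1), ‖u + j‖ := Finset.prod_pos fun j _ => norm_pos_iff.2 (by
    intro h2; have := congrArg Complex.re h2; simp at this
    have hj : (0:ℝ) ≤ j := by positivity
    linarith)
  have hp2 : 0 < ∏ j ∈ Finset.range (n + 1), ‖u + h + j‖ := Finset.prod_pos fun j _ => norm_pos_iff.2 (by
    intro h2; have := congrArg Complex.re h2; simp at this
    have hj : (0:ℝ) ≤ j := by positivity
    linarith)
  rw [div_mul_eq_mul_div, div_le_div_iff₀ hp2 hp1]
  set a := (n:ℝ) ^ u.re * ‖((n.factorial : ℕ) : ℂ)‖ with ha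
  have ha0 : 0 ≤ a := by positivity
  set Sg := ∑ j ∈ Finset.range (n + 1), (u.re + j) / ((u.re + h + j) ^ 2 + u.im ^ 2) with hSg
  calc (n:ℝ) ^ u.re * Real.exp (Real.log n * h) * ‖((n.factorial : ℕ) : ℂ)‖ * ∏ j ∈ Finset.range (n + 1), ‖u + j‖
      = a * Real.exp (Real.log n * h) * ∏ j ∈ Finset.range (n + 1), ‖u + j‖ := by rw [ha]; ring
    _ ≤ a * Real.exp (Real.log n * h) * ((∏ j ∈ Finset.range (n + 1), ‖u + h + j‖) * Real.exp (-(h * Sg))) := by gcongr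
    _ = a * Real.exp (Real.log n * h + -(h * Sg)) * ∏ j ∈ Finset.range (n + 1), ‖u + h + j‖ := by rw [Real.exp_add]; ring
    _ ≤ a * Real.exp ((3 + 1 / 2 * Real.log (1 + u.im ^ 2)) * h) * ∏ j ∈ Finset.range (n + 1), ‖u + h + j‖ := by
        gcongr
        nlinarith

lemma gammaR_logDeriv {s : ℂ} (h1 : 1 / 2 ≤ s.re) (h2 : s.re ≤ 1) :
    (logDeriv Complex.Gammaℝ s).re ≤ 4 * Real.log (|s.im| + 4) := by
  have hl : 1 ≤ Real.log (|s.im| + 4) := by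
    rw [Real.le_log_iff_exp_le (by positivity)]
    have := Real.exp_one_lt_d9
    have := abs_nonneg s.im
    linarith
  apply re_logDeriv_le (gammaR_diff (by linarith)) (Complex.Gammaℝ_ne_zero_of_re_pos (by linarith)) (r := 1 / 2) (by norm_num)
  intro x hx hx1
  rw [Complex.Gammaℝ_def, Complex.Gammaℝ_def, norm_mul, norm_mul,
    Complex.norm_cpow_eq_rpow_re_of_pos Real.pi_pos, Complex.norm_cpow_eq_rpow_re_of_pos Real.pi_pos]
  have e1 := gamma_shift (u := s / 2) (h := x / 2) (by simp; linarith) (by linarith) (by simp; linarith)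
  rw [show s / 2 + ((x / 2 : ℝ) : ℂ) = (s + x) / 2 by push_cast; ring] at e1
  have e2 : π ^ (-(s + x) / 2 : ℂ).re ≤ π ^ (-s / 2 : ℂ).re := by
    apply Real.rpow_le_rpow_of_exponent_le
    · linarith [Real.pi_gt_three]
    · simp; linarith
  have e3 : 1 / 2 * Real.log (1 + (s / 2).im ^ 2) ≤ Real.log (|s.im| + 4) := by
    have : Real.log (1 + (s / 2).im ^ 2) ≤ Real.log ((|s.im| + 4) ^ 2) := by
      apply Real.log_le_log (by positivity)
      simp only [Complex.div_ofNat_im]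
      have := abs_nonneg s.im
      nlinarith [sq_abs s.im]
    rw [Real.log_pow] at this
    push_cast at this
    linarith
  calc π ^ (-(s + x) / 2 : ℂ).re * ‖Complex.Gamma ((s + x) / 2)‖
      ≤ π ^ (-s / 2 : ℂ).re * (‖Complex.Gamma (s / 2)‖ * Real.exp ((3 + 1 / 2 * Real.log (1 + (s / 2).im ^ 2)) * (x / 2))) := by gcongr
    _ ≤ π ^ (-s / 2 : ℂ).re * (‖Complex.Gamma (s / 2)‖ * Real.exp (4 * Real.log (|s.im| + 4) * x)) := by
        gcongr
        · linarith
        · linarith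
    _ = _ := by ring

lemma zeros_sum_le (hRH : RiemannHypothesis) (S : Finset ℝ) {s : ℂ} (h1 : 1 / 2 < s.re) (h2 : s.re ≤ 1) :
    ∑ γ ∈ S, (ordMult γ : ℝ) * ((s.re - 1 / 2) / ((s.re - 1 / 2) ^ 2 + (s.im - γ) ^ 2)) ≤
      (logDeriv riemannZeta₁ s).re + 6 * Real.log (|s.im| + 4) := by
  have e := QC_sum ordMult S xiF (QC_xi hRH) (fun γ _ => ordMult_le γ) s h1
  have hl : 1 ≤ Real.log (|s.im| + 4) := by
    rw [Real.le_log_iff_exp_le (by positivity)]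
    have := Real.exp_one_lt_d9
    have := abs_nonneg s.im
    linarith
  have hs0 : s ≠ 0 := by rintro rfl; norm_num at h1
  have hsn : 1 / 2 ≤ ‖s‖ := h1.le.trans (Complex.re_le_norm s)
  have e2 : logDeriv xiF s = 1 / s + logDeriv riemannZeta₁ s + logDeriv Complex.Gammaℝ s := by
    have h3 : xiF =ᶠ[nhds s] fun s => (s * riemannZeta₁ s) * Complex.Gammaℝ s := by
      have hop : IsOpen {s : ℂ | 0 < s.re} := isOpen_lt continuous_const Complex.continuous_re
      filter_upwards [hop.mem_nhds (show 0 < s.re by linarith)] with z hz using xiF_eq hz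
    have hz0 := zeta1_ne_zero hRH h1
    have hzd : DifferentiableAt ℂ riemannZeta₁ s := differentiable_riemannZeta₁ s
    have h4 : logDeriv xiF s = logDeriv (fun s => (s * riemannZeta₁ s) * Complex.Gammaℝ s) s := by
      rw [logDeriv_apply, logDeriv_apply, h3.deriv_eq, h3.eq_of_nhds]
    rw [h4, logDeriv_mul (f := fun s => s * riemannZeta₁ s) (g := Complex.Gammaℝ) s (mul_ne_zero hs0 hz0) (Complex.Gammaℝ_ne_zero_of_re_pos (by linarith)) (by fun_prop) (gammaR_diff (by linarith)),
      logDeriv_mul (f := fun s => s) (g := riemannZeta₁) s hs0 hz0 (by fun_prop) hzd]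
    simp [logDeriv_apply]
  have e3 : (1 / s).re ≤ 2 := by
    refine (Complex.re_le_norm _).trans ?_
    rw [norm_div, norm_one, div_le_iff₀ (by linarith)]; linarith
  have e4 := gammaR_logDeriv h1.le h2
  rw [e2, Complex.add_re, Complex.add_re] at e
  refine le_trans (le_of_eq ?_) (e.trans (by linarith))
  refine Finset.sum_congr rfl fun γ _ => ?_
  congr 1
  rw [Complex.inv_re, Complex.normSq_apply]
  simp
  ring

lemma vert_integrable {G : ℂ → ℂ} {α B : ℝ}
    (hd : ∀ s : ℂ, s.re = α → ContinuousAt G s)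
    (hb : ∀ y : ℝ, ‖G (α + y * Complex.I)‖ ≤ B / (1 + y ^ 2)) :
    Integrable (fun y : ℝ => G (α + y * Complex.I)) := by
  have hB : Integrable (fun y : ℝ => B / (1 + y ^ 2)) := by
    simpa [div_eq_mul_inv] using integrable_inv_one_add_sq.const_mul B
  refine hB.mono' ?_ (ae_of_all _ hb)
  apply Continuous.aestronglyMeasurable
  rw [continuous_iff_continuousAt]
  intro y
  exact ContinuousAt.comp (f := fun y : ℝ => (α + y * Complex.I : ℂ)) (hd _ (by simp)) (by fun_prop)

lemma shift_lemma {G : ℂ → ℂ} {α β B : ℝ} (hαβ : α ≤ β)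
    (hd : ∀ s : ℂ, α ≤ s.re → s.re ≤ β → DifferentiableAt ℂ G s)
    (hb : ∀ x y : ℝ, α ≤ x → x ≤ β → ‖G (x + y * Complex.I)‖ ≤ B / (1 + y ^ 2)) :
    ∫ y : ℝ, G (α + y * Complex.I) = ∫ y : ℝ, G (β + y * Complex.I) := by
  have hB0 : 0 ≤ B := by
    have := (norm_nonneg _).trans (hb α 0 le_rfl hαβ)
    simpa using this
  have i1 := vert_integrable (G := G) (α := α) (fun s hs => (hd s hs.ge (hs.le.trans hαβ)).continuousAt) (fun y => hb α y le_rfl hαβ)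
  have i2 := vert_integrable (G := G) (α := β) (fun s hs => (hd s (hαβ.trans hs.ge) hs.le).continuousAt) (fun y => hb β y hαβ le_rfl)
  have t1 := intervalIntegral_tendsto_integral i1 tendsto_neg_atTop_atBot tendsto_id
  have t2 := intervalIntegral_tendsto_integral i2 tendsto_neg_atTop_atBot tendsto_id
  have hdec : Tendsto (fun R : ℝ => 2 * (β - α) * B / (1 + R ^ 2)) atTop (nhds 0) := by
    apply Tendsto.div_atTop tendsto_const_nhds
    apply tendsto_atTop_add_const_left
    exact tendsto_pow_atTop (by norm_num)
  have key : ∀ R : ℝ, ‖(∫ y in (-R)..R, G (α + y * Complex.I)) - ∫ y in (-R)..R, G (β + y * Complex.I)‖ ≤ 2 * (β - α) * B / (1 + R ^ 2) := by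
    intro R
    have e := Complex.integral_boundary_rect_eq_zero_of_differentiableOn G (α + (-R : ℝ) * Complex.I) (β + R * Complex.I) (by
      intro s hs
      rw [Complex.mem_reProdIm] at hs
      have h1 := hs.1
      simp only [Complex.add_re, Complex.ofReal_re, Complex.mul_re, Complex.I_re, Complex.I_im, Complex.ofReal_im, mul_zero, zero_mul, sub_zero, add_zero] at h1
      rw [Set.uIcc_of_le hαβ] at h1
      exact (hd s h1.1 h1.2).differentiableWithinAt)
    simp only [Complex.add_re, Complex.add_im, Complex.ofReal_re, Complex.mul_re, Complex.mul_im, Complex.I_re, Complex.I_im, Complex.ofReal_im, mul_zero, zero_mul, sub_zero, add_zero, mul_one, zero_add] at e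
    have n1 : ‖∫ x in α..β, G (x + (-R : ℝ) * Complex.I)‖ ≤ (β - α) * B / (1 + R ^ 2) := by
      have := intervalIntegral.norm_integral_le_of_norm_le_const (a := α) (b := β) (f := fun x : ℝ => G (x + (-R : ℝ) * Complex.I)) (C := B / (1 + R ^ 2)) (by
        intro x hx
        rw [Set.uIoc_of_le hαβ] at hx
        have := hb x (-R) hx.1.le hx.2
        simpa using this)
      rw [abs_of_nonneg (by linarith)] at this
      calc _ ≤ _ := this
        _ = _ := by ring
    have n2 : ‖∫ x in α..β, G (x + R * Complex.I)‖ ≤ (β - α) * B / (1 + R ^ 2) := by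
      have := intervalIntegral.norm_integral_le_of_norm_le_const (a := α) (b := β) (f := fun x : ℝ => G (x + R * Complex.I)) (C := B / (1 + R ^ 2)) (by
        intro x hx
        rw [Set.uIoc_of_le hαβ] at hx
        exact hb x R hx.1.le hx.2)
      rw [abs_of_nonneg (by linarith)] at this
      calc _ ≤ _ := this
        _ = _ := by ring
    have e2 : Complex.I * ((∫ y in (-R)..R, G (α + y * Complex.I)) - ∫ y in (-R)..R, G (β + y * Complex.I)) =
        (∫ x in α..β, G (x + (-R : ℝ) * Complex.I)) - ∫ x in α..β, G (x + R * Complex.I) := by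
      simp only [smul_eq_mul] at e
      linear_combination -e
    have e3 := congrArg norm e2
    rw [norm_mul, Complex.norm_I, one_mul] at e3
    rw [e3]
    refine (norm_sub_le _ _).trans ?_
    calc _ ≤ (β - α) * B / (1 + R ^ 2) + (β - α) * B / (1 + R ^ 2) := add_le_add n1 n2
      _ = _ := by ring
  have t3 := squeeze_zero_norm key hdec
  have t4 := t1.sub t2
  have := tendsto_nhds_unique t3 t4
  exact (sub_eq_zero.1 this.symm)

/-- `sinh z / z`, entire -/
def shc (z : ℂ) : ℂ := dslope Complex.sinh 0 z

lemma shc_diff : Differentiable ℂ shc := by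
  unfold shc
  have : Differentiable ℂ (dslope Complex.sinh 0) := by
    rw [← differentiableOn_univ, Complex.differentiableOn_dslope univ_mem]
    exact Complex.differentiable_sinh.differentiableOn
  exact this

lemma shc_mul (z : ℂ) : z * shc z = Complex.sinh z := by
  have := sub_smul_dslope Complex.sinh 0 z
  simpa [shc] using this

lemma norm_cosh_le (z : ℂ) : ‖Complex.cosh z‖ ≤ Real.exp |z.re| := by
  rw [Complex.cosh, norm_div]
  have := norm_add_le (Complex.exp z) (Complex.exp (-z))
  rw [Complex.norm_exp, Complex.norm_exp] at this
  have h1 : Real.exp z.re ≤ Real.exp |z.re| := Real.exp_le_exp.2 (le_abs_self _)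
  have h2 : Real.exp (-z).re ≤ Real.exp |z.re| := Real.exp_le_exp.2 (by simpa using neg_le_abs z.re)
  simp only [Complex.norm_ofNat]
  linarith

lemma norm_sinh_le (z : ℂ) : ‖Complex.sinh z‖ ≤ Real.exp |z.re| := by
  rw [Complex.sinh, norm_div]
  have := norm_sub_le (Complex.exp z) (Complex.exp (-z))
  rw [Complex.norm_exp, Complex.norm_exp] at this
  have h1 : Real.exp z.re ≤ Real.exp |z.re| := Real.exp_le_exp.2 (le_abs_self _)
  have h2 : Real.exp (-z).re ≤ Real.exp |z.re| := Real.exp_le_exp.2 (by simpa using neg_le_abs z.re)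
  simp only [Complex.norm_ofNat]
  linarith

lemma norm_shc_le (z : ℂ) : ‖shc z‖ ≤ Real.exp |z.re| := by
  by_cases hz : z = 0
  · subst hz; simp [shc, Complex.deriv_sinh]
  have hc : Convex ℝ {w : ℂ | |w.re| ≤ |z.re|} := by
    have : {w : ℂ | |w.re| ≤ |z.re|} = Complex.reLm ⁻¹' (Set.Icc (-|z.re|) |z.re|) := by
      ext w; simp [abs_le]
    rw [this]
    exact (convex_Icc _ _).linear_preimage _
  have := hc.norm_image_sub_le_of_norm_deriv_le (f := Complex.sinh) (C := Real.exp |z.re|) (x := 0) (y := z)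
    (fun w _ => Complex.differentiable_sinh w)
    (fun w hw => by
      rw [Complex.deriv_sinh]
      exact (norm_cosh_le w).trans (Real.exp_le_exp.2 hw)) (by simp) (by simp)
  rw [← shc_mul z, Complex.sinh_zero, sub_zero, sub_zero, norm_mul, mul_comm] at this
  exact le_of_mul_le_mul_right this (norm_pos_iff.2 hz)

/-- kernel -/
def Kf (a : ℝ) (w : ℂ) : ℂ := shc (a * w) ^ 4

lemma Kf_diff (a : ℝ) : Differentiable ℂ (Kf a) := by
  unfold Kf
  have := shc_diff
  fun_prop

lemma Kf_norm {a : ℝ} (ha : 1 / 8 ≤ a) (w : ℂ) :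
    ‖Kf a w‖ * (1 + a ^ 2 * ‖w‖ ^ 2) ^ 2 ≤ 4 * Real.exp (4 * a * |w.re|) := by
  have h1 := norm_shc_le (a * w)
  have h2 := norm_sinh_le (a * w)
  rw [← shc_mul, norm_mul] at h2
  have ha0 : 0 < a := by linarith
  have hr : |((a:ℂ) * w).re| = a * |w.re| := by simp [abs_mul, abs_of_pos ha0]
  have hn : ‖(a:ℂ) * w‖ = a * ‖w‖ := by rw [norm_mul, Complex.norm_real, Real.norm_of_nonneg ha0.le]
  rw [hr] at h1 h2
  rw [hn] at h2
  set E := Real.exp (a * |w.re|) with hE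
  set v := ‖shc (a * w)‖ with hv
  have hv0 : 0 ≤ v := norm_nonneg _
  have h3 : v ^ 2 * (1 + a ^ 2 * ‖w‖ ^ 2) ≤ 2 * E ^ 2 := by
    have e1 : v ^ 2 ≤ E ^ 2 := by gcongr
    have e2 : (a * ‖w‖ * v) ^ 2 ≤ E ^ 2 := by gcongr
    nlinarith
  have h4 : ‖Kf a w‖ = v ^ 4 := by rw [Kf, norm_pow]
  have h5 : Real.exp (4 * a * |w.re|) = E ^ 4 := by
    rw [hE, ← Real.exp_nat_mul]; congr 1; push_cast; ring
  rw [h4, h5]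
  calc v ^ 4 * (1 + a ^ 2 * ‖w‖ ^ 2) ^ 2 = (v ^ 2 * (1 + a ^ 2 * ‖w‖ ^ 2)) ^ 2 := by ring
    _ ≤ (2 * E ^ 2) ^ 2 := by gcongr
    _ = _ := by ring

lemma Kf_bound {a : ℝ} (ha : 1 / 8 ≤ a) (x y : ℝ) :
    ‖Kf a (x + y * Complex.I)‖ ≤ 16384 * Real.exp (4 * a * |x|) / (1 + y ^ 2) ^ 2 := by
  have := Kf_norm ha (x + y * Complex.I)
  have hn : ‖(x + y * Complex.I : ℂ)‖ ^ 2 = x ^ 2 + y ^ 2 := by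
    rw [Complex.sq_norm, Complex.normSq_apply]; simp; ring
  rw [hn] at this
  simp only [Complex.add_re, Complex.ofReal_re, Complex.mul_re, Complex.I_re, Complex.I_im, Complex.ofReal_im, mul_zero, zero_mul, sub_zero, add_zero] at this
  rw [le_div_iff₀ (by positivity)]
  have h1 : (1 + y ^ 2) ≤ 64 * (1 + a ^ 2 * (x ^ 2 + y ^ 2)) := by
    have : 1 / 64 ≤ a ^ 2 := by nlinarith
    nlinarith [sq_nonneg x, sq_nonneg y]
  calc ‖Kf a (x + y * Complex.I)‖ * (1 + y ^ 2) ^ 2 ≤ ‖Kf a (x + y * Complex.I)‖ * (64 * (1 + a ^ 2 * (x ^ 2 + y ^ 2))) ^ 2 := by gcongr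
    _ = 4096 * (‖Kf a (x + y * Complex.I)‖ * (1 + a ^ 2 * (x ^ 2 + y ^ 2)) ^ 2) := by ring
    _ ≤ 4096 * (4 * Real.exp (4 * a * |x|)) := by gcongr
    _ = _ := by ring

/-- kernel on the imaginary axis -/
def kr (a y : ℝ) : ℝ := ‖Kf a (y * Complex.I)‖

lemma shc_im (y : ℝ) : shc (y * Complex.I) = (if y = 0 then 1 else Real.sin y / y : ℝ) := by
  split_ifs with h
  · subst h; simp [shc, Complex.deriv_sinh]
  · have := shc_mul (y * Complex.I)
    rw [Complex.sinh_mul_I] at this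
    have hy : (y:ℂ) ≠ 0 := by exact_mod_cast h
    push_cast
    rw [eq_div_iff hy]
    have h2 := Complex.I_ne_zero
    apply mul_right_cancel₀ h2
    rw [← this]; ring

lemma Kf_eq (a y : ℝ) : Kf a (y * Complex.I) = (kr a y : ℂ) := by
  rw [kr, Kf, show (a:ℂ) * (y * Complex.I) = ((a * y : ℝ) : ℂ) * Complex.I by push_cast; ring, shc_im, norm_pow, Complex.norm_real]
  set q : ℝ := (if a * y = 0 then 1 else Real.sin (a * y) / (a * y))
  push_cast
  norm_cast
  rw [Real.norm_eq_abs, ← abs_pow, abs_of_nonneg (by positivity)]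

lemma kr_nonneg (a y : ℝ) : 0 ≤ kr a y := norm_nonneg _

lemma kr_cont (a : ℝ) : Continuous (kr a) := by
  unfold kr
  have := (Kf_diff a).continuous
  fun_prop

lemma kr_le {a : ℝ} (ha : 1 / 8 ≤ a) (y : ℝ) : kr a y ≤ 4 / (1 + a ^ 2 * y ^ 2) ^ 2 := by
  have := Kf_norm ha (y * Complex.I)
  rw [le_div_iff₀ (by positivity)]
  simpa [kr] using this

lemma kr_lower {a y : ℝ} (ha : 1 / 8 ≤ a) (hy : |y| ≤ 1 / (32 * a)) : 1 / 2 ≤ kr a y := by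
  have ha0 : 0 < a := by linarith
  rw [kr, Kf, show (a:ℂ) * (y * Complex.I) = ((a * y : ℝ) : ℂ) * Complex.I by push_cast; ring, shc_im, norm_pow, Complex.norm_real]
  have hx : |a * y| ≤ 1 / 32 := by
    rw [abs_mul, abs_of_pos ha0]
    calc a * |y| ≤ a * (1 / (32 * a)) := by gcongr
      _ = _ := by field_simp
  have : 7 / 8 ≤ ‖(if a * y = 0 then 1 else Real.sin (a * y) / (a * y) : ℝ)‖ := by
    split_ifs with h
    · norm_num
    · rw [norm_div, Real.norm_eq_abs, Real.norm_eq_abs, le_div_iff₀ (abs_pos.2 h)]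
      have h1 := Real.sin_gt_sub_cube (abs_pos.2 h)
      have h2 : Real.sin |a * y| ≤ |Real.sin (a * y)| := by
        rcases abs_cases (a * y) with ⟨h3, _⟩ | ⟨h3, _⟩
        · rw [h3]; exact le_abs_self _
        · rw [h3, Real.sin_neg]; exact neg_le_abs _
      have h3 : |a * y| ^ 3 ≤ 1 / 4 * |a * y| := by
        have := abs_nonneg (a * y)
        nlinarith [sq_nonneg |a * y|, mul_nonneg this this]
      have := abs_nonneg (a * y)
      linarith
  calc (1:ℝ) / 2 ≤ (7 / 8) ^ 4 := by norm_num
    _ ≤ _ := by gcongr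

lemma int_scaled {a : ℝ} (ha : 0 < a) : Integrable (fun y : ℝ => (1 + (a * y) ^ 2)⁻¹) ∧
    ∫ y : ℝ, (1 + (a * y) ^ 2)⁻¹ = π / a := by
  constructor
  · exact integrable_inv_one_add_sq.comp_mul_left' ha.ne'
  · rw [Measure.integral_comp_mul_left (fun y : ℝ => (1 + y ^ 2)⁻¹) a, integral_univ_inv_one_add_sq]
    rw [abs_of_pos (inv_pos.2 ha), smul_eq_mul]; field_simp

lemma kr_le2 {a : ℝ} (ha : 1 / 8 ≤ a) (y : ℝ) : kr a y * (1 + |y|) ≤ 36 * (1 + (a * y) ^ 2)⁻¹ := by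
  have h := kr_le ha y
  have h1 : 1 + |y| ≤ 9 * (1 + (a * y) ^ 2) := by
    have h2 : |y| ≤ 8 * |a * y| := by
      rw [abs_mul, abs_of_pos (show 0 < a by linarith)]
      nlinarith [abs_nonneg y]
    nlinarith [sq_abs (a * y), sq_nonneg (|a * y| - 1)]
  calc kr a y * (1 + |y|) ≤ 4 / (1 + a ^ 2 * y ^ 2) ^ 2 * (9 * (1 + (a * y) ^ 2)) := by
        gcongr
    _ = _ := by rw [mul_pow]; field_simp; norm_num

lemma kr_int {a : ℝ} (ha : 1 / 8 ≤ a) : Integrable (fun y => kr a y * (1 + |y|)) ∧ ∫ y, kr a y * (1 + |y|) ≤ 36 * (π / a) := by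
  have ha0 : 0 < a := by linarith
  have hi : Integrable (fun y => kr a y * (1 + |y|)) := by
    refine ((int_scaled ha0).1.const_mul 36).mono' ?_ (ae_of_all _ fun y => ?_)
    · have := kr_cont a
      exact Continuous.aestronglyMeasurable (by fun_prop)
    · rw [Real.norm_of_nonneg (by have := kr_nonneg a y; positivity)]
      exact kr_le2 ha y
  refine ⟨hi, ?_⟩
  rw [← (int_scaled ha0).2, ← integral_const_mul]
  exact integral_mono hi ((int_scaled ha0).1.const_mul 36) (kr_le2 ha)

lemma kr_int' {a : ℝ} (ha : 1 / 8 ≤ a) : Integrable (kr a) ∧ ∫ y, kr a y ≤ 36 * (π / a) := by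
  have h := kr_int ha
  have hle : ∀ y, kr a y ≤ kr a y * (1 + |y|) := fun y => by
    nlinarith [kr_nonneg a y, abs_nonneg y, mul_nonneg (kr_nonneg a y) (abs_nonneg y)]
  have hi : Integrable (kr a) := h.1.mono' (kr_cont a).aestronglyMeasurable (ae_of_all _ fun y => by
      rw [Real.norm_of_nonneg (kr_nonneg a y)]; exact hle y)
  exact ⟨hi, (integral_mono hi h.1 hle).trans h.2⟩

lemma one_le_log4 (t : ℝ) : 1 ≤ Real.log (|t| + 4) := by
  rw [Real.le_log_iff_exp_le (by positivity)]
  have := Real.exp_one_lt_d9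
  have := abs_nonneg t
  linarith

lemma log4_add (t y : ℝ) : Real.log (|t + y| + 4) ≤ Real.log (|t| + 4) * (1 + |y|) := by
  have h1 : Real.log (|t + y| + 4) ≤ Real.log ((|t| + 4) * (1 + |y|)) := by
    apply Real.log_le_log (by positivity)
    have := abs_add_le t y
    nlinarith [abs_nonneg t, abs_nonneg y, mul_nonneg (abs_nonneg t) (abs_nonneg y)]
  rw [Real.log_mul (by positivity) (by positivity)] at h1
  have h2 := Real.log_le_sub_one_of_pos (x := 1 + |y|) (by positivity)
  have h3 := one_le_log4 t
  nlinarith [abs_nonneg y]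

lemma logDeriv_zeta1_diff (hRH : RiemannHypothesis) {s : ℂ} (hs : 1 / 2 < s.re) :
    DifferentiableAt ℂ (logDeriv riemannZeta₁) s := by
  have h1 : AnalyticAt ℂ riemannZeta₁ s := differentiable_riemannZeta₁.analyticAt s
  exact (h1.deriv.differentiableAt).div h1.differentiableAt (zeta1_ne_zero hRH hs)

lemma line_bound (hRH : RiemannHypothesis) {a e t : ℝ} (ha : 1 / 8 ≤ a) (he : 0 < e) (he1 : e ≤ 1 / 4) :
    ∃ B : ℝ, ∀ x y : ℝ, 0 ≤ x → x ≤ 3 / 2 - e →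
      ‖logDeriv riemannZeta₁ ((x + y * Complex.I) + (1 / 2 + e + t * Complex.I)) * Kf a (x + y * Complex.I)‖ ≤ B / (1 + y ^ 2) := by
  obtain ⟨A, hA, hl⟩ := zeta1_log_bounds hRH he (by linarith)
  refine ⟨A * Real.log (|t| + 4) * 2 * (16384 * Real.exp (4 * a * 2)), fun x y hx hx1 => ?_⟩
  have h1 := (hl ((x + y * Complex.I) + (1 / 2 + e + t * Complex.I)) (by simp; linarith) (by simp; linarith)).2
  have him : ((x + y * Complex.I) + (1 / 2 + e + t * Complex.I) : ℂ).im = t + y := by simp [add_comm]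
  rw [him] at h1
  have h2 := Kf_bound ha x y
  have h3 := log4_add t y
  have h4 : 1 + |y| ≤ 2 * (1 + y ^ 2) := by nlinarith [sq_abs y, sq_nonneg (|y| - 1)]
  have h0 := one_le_log4 t
  have h0' := one_le_log4 (t + y)
  rw [norm_mul]
  have h5 : Real.exp (4 * a * |x|) ≤ Real.exp (4 * a * 2) := by
    apply Real.exp_le_exp.2
    rw [abs_of_nonneg hx]
    have : x ≤ 2 := by linarith
    gcongr
  calc _ ≤ (A * Real.log (|t + y| + 4)) * (16384 * Real.exp (4 * a * |x|) / (1 + y ^ 2) ^ 2) := by gcongr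
    _ ≤ (A * (Real.log (|t| + 4) * (2 * (1 + y ^ 2)))) * (16384 * Real.exp (4 * a * 2) / (1 + y ^ 2) ^ 2) := by
        gcongr
        exact h3.trans (by gcongr)
    _ = _ := by field_simp

lemma shift_main (hRH : RiemannHypothesis) {a e t : ℝ} (ha : 1 / 8 ≤ a) (he : 0 < e) (he1 : e ≤ 1 / 4) :
    Integrable (fun y : ℝ => logDeriv riemannZeta₁ (1 / 2 + e + (t + y : ℝ) * Complex.I) * (kr a y : ℂ)) ∧
    ∫ y : ℝ, logDeriv riemannZeta₁ (1 / 2 + e + (t + y : ℝ) * Complex.I) * (kr a y : ℂ) =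
    ∫ y : ℝ, logDeriv riemannZeta₁ (2 + (t + y : ℝ) * Complex.I) * Kf a ((3 / 2 - e : ℝ) + y * Complex.I) := by
  obtain ⟨B, hB⟩ := line_bound hRH (t := t) ha he he1
  set G : ℂ → ℂ := fun s => logDeriv riemannZeta₁ (s + (1 / 2 + e + t * Complex.I)) * Kf a s with hG
  have hd : ∀ s : ℂ, 0 ≤ s.re → s.re ≤ 3 / 2 - e → DifferentiableAt ℂ G s := by
    intro s hs _
    refine DifferentiableAt.mul ?_ (Kf_diff a s)
    have := logDeriv_zeta1_diff hRH (s := s + (1 / 2 + e + t * Complex.I)) (by simp; linarith)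
    exact this.comp s (f := fun s : ℂ => s + (1 / 2 + e + t * Complex.I)) (by fun_prop)
  have h1 := shift_lemma (G := G) (α := 0) (β := 3 / 2 - e) (B := B) (by linarith) hd hB
  have h2 := vert_integrable (G := G) (α := 0) (B := B) (fun s hs => (hd s hs.ge (by linarith)).continuousAt) (fun y => hB 0 y le_rfl (by linarith))
  have e1 : ∀ y : ℝ, G ((0:ℝ) + y * Complex.I) = logDeriv riemannZeta₁ (1 / 2 + e + (t + y : ℝ) * Complex.I) * (kr a y : ℂ) := by
    intro y
    simp only [hG]
    rw [← Kf_eq]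
    congr 2
    · push_cast; ring
    · simp
  have e2 : ∀ y : ℝ, G ((3 / 2 - e : ℝ) + y * Complex.I) = logDeriv riemannZeta₁ (2 + (t + y : ℝ) * Complex.I) * Kf a ((3 / 2 - e : ℝ) + y * Complex.I) := by
    intro y
    simp only [hG]
    congr 2
    push_cast; ring
  simp only [e1, e2] at h1 h2
  exact ⟨h2, h1⟩

lemma logDeriv_zeta1_eq {s : ℂ} (hs : 1 < s.re) :
    logDeriv riemannZeta₁ s = 1 / (s - 1) - LSeries (fun n => (ArithmeticFunction.vonMangoldt n : ℂ)) s := by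
  rw [ArithmeticFunction.LSeries_vonMangoldt_eq_deriv_riemannZeta_div hs]
  have h1 : s ≠ 1 := by rintro rfl; simp at hs
  have h2 : riemannZeta₁ =ᶠ[nhds s] fun s => (s - 1) * riemannZeta s := by
    filter_upwards [isOpen_compl_singleton.mem_nhds h1] with z hz using zeta1_of_ne hz
  have h3 : logDeriv riemannZeta₁ s = logDeriv (fun s => (s - 1) * riemannZeta s) s := by
    rw [logDeriv_apply, logDeriv_apply, h2.deriv_eq, h2.eq_of_nhds]
  have h4 : s - 1 ≠ 0 := sub_ne_zero.2 h1
  rw [h3, logDeriv_mul (f := fun s => s - 1) (g := riemannZeta) s h4 (riemannZeta_ne_zero_of_one_lt_re hs) (by fun_prop) (differentiableAt_riemannZeta h1)]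
  simp [logDeriv_apply]
  ring

/-- weights -/
def wt (a : ℝ) (n : ℕ) : ℂ := ∫ y : ℝ, (n : ℂ) ^ (-(y * Complex.I)) * (kr a y : ℂ)

lemma norm_cpow_vert {n : ℕ} (hn : 1 ≤ n) (s : ℂ) : ‖(n:ℂ) ^ s‖ = (n:ℝ) ^ s.re := by
  exact Complex.norm_natCast_cpow_of_pos hn s

lemma wt_le {a : ℝ} (ha : 1 / 8 ≤ a) {n : ℕ} (hn : 1 ≤ n) : ‖wt a n‖ ≤ 36 * (π / a) := by
  refine (norm_integral_le_integral_norm _).trans ((le_of_eq ?_).trans (kr_int' ha).2)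
  refine integral_congr_ae (ae_of_all _ fun y => ?_)
  simp only [norm_mul]
  rw [norm_cpow_vert hn, Complex.norm_real, Real.norm_of_nonneg (kr_nonneg a y)]
  simp

lemma wt_shift {a : ℝ} (ha : 1 / 8 ≤ a) {n : ℕ} (hn : 1 ≤ n) {β : ℝ} (hβ : 0 ≤ β) :
    wt a n = ∫ y : ℝ, (n : ℂ) ^ (-(β + y * Complex.I)) * Kf a (β + y * Complex.I) := by
  have hn0 : (n:ℂ) ≠ 0 := by exact_mod_cast (by omega : n ≠ 0)
  have h1 := shift_lemma (G := fun s => (n:ℂ) ^ (-s) * Kf a s) (α := 0) (β := β) (B := 16384 * Real.exp (4 * a * β)) hβ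
    (fun s _ _ => ((differentiableAt_id.neg).const_cpow (Or.inl hn0)).mul (Kf_diff a s)) (by
      intro x y hx hxβ
      rw [norm_mul, norm_cpow_vert hn]
      have h2 := Kf_bound ha x y
      have h3 : (n:ℝ) ^ (-(x + y * Complex.I) : ℂ).re ≤ 1 := by
        apply Real.rpow_le_one_of_one_le_of_nonpos (by exact_mod_cast hn)
        simpa using hx
      have h5 : Real.exp (4 * a * |x|) ≤ Real.exp (4 * a * β) := by
        apply Real.exp_le_exp.2
        rw [abs_of_nonneg hx]; gcongr
      calc _ ≤ 1 * (16384 * Real.exp (4 * a * |x|) / (1 + y ^ 2) ^ 2) := by gcongr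
        _ ≤ 16384 * Real.exp (4 * a * β) / (1 + y ^ 2) := by
          rw [one_mul]
          have : 1 + y ^ 2 ≤ (1 + y ^ 2) ^ 2 := by nlinarith [sq_nonneg y]
          gcongr)
  rw [wt, ← h1]
  refine integral_congr_ae (ae_of_all _ fun y => ?_)
  simp only [← Kf_eq]
  simp

lemma wt_zero {a : ℝ} (ha : 1 / 8 ≤ a) {n : ℕ} (hn : 1 ≤ n) (hna : 4 * a ≤ Real.log n) : wt a n = 0 := by
  have hn0 : (0:ℝ) < n := by exact_mod_cast hn
  have ha0 : 0 < a := by linarith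
  have key : ∀ X : ℝ, 0 < X → ‖wt a n‖ ≤ 4 * π / (a ^ 3) / X ^ 2 := by
    intro X hX
    rw [wt_shift ha hn hX.le]
    refine (norm_integral_le_integral_norm _).trans ?_
    have hb : ∀ y : ℝ, ‖(n : ℂ) ^ (-(X + y * Complex.I)) * Kf a (X + y * Complex.I)‖ ≤ 4 / (a ^ 2 * X ^ 2) * (1 + (a * y) ^ 2)⁻¹ := by
      intro y
      rw [norm_mul, norm_cpow_vert hn]
      have h2 := Kf_norm ha (X + y * Complex.I)
      have hnn : ‖(X + y * Complex.I : ℂ)‖ ^ 2 = X ^ 2 + y ^ 2 := by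
        rw [Complex.sq_norm, Complex.normSq_apply]; simp; ring
      rw [hnn] at h2
      simp only [Complex.add_re, Complex.neg_re, Complex.ofReal_re, Complex.mul_re, Complex.I_re, Complex.I_im, Complex.ofReal_im, mul_zero, zero_mul, sub_zero, add_zero] at h2 ⊢
      rw [abs_of_pos hX] at h2
      have h3 : (n:ℝ) ^ (-X) ≤ Real.exp (-(4 * a * X)) := by
        rw [Real.rpow_def_of_pos hn0]
        apply Real.exp_le_exp.2
        nlinarith
      have h4 : a ^ 2 * X ^ 2 * (1 + (a * y) ^ 2) ≤ (1 + a ^ 2 * (X ^ 2 + y ^ 2)) ^ 2 := by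
        have p1 : 0 ≤ a ^ 2 * X ^ 2 := by positivity
        have p2 : 0 ≤ a ^ 2 * y ^ 2 := by positivity
        nlinarith
      rw [← div_eq_mul_inv, div_div, le_div_iff₀ (by positivity)]
      calc (n:ℝ) ^ (-X) * ‖Kf a (X + y * Complex.I)‖ * (a ^ 2 * X ^ 2 * (1 + (a * y) ^ 2))
          ≤ Real.exp (-(4 * a * X)) * ‖Kf a (X + y * Complex.I)‖ * (1 + a ^ 2 * (X ^ 2 + y ^ 2)) ^ 2 := by gcongr
        _ = Real.exp (-(4 * a * X)) * (‖Kf a (X + y * Complex.I)‖ * (1 + a ^ 2 * (X ^ 2 + y ^ 2)) ^ 2) := by ring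
        _ ≤ Real.exp (-(4 * a * X)) * (4 * Real.exp (4 * a * X)) := by gcongr
        _ = 4 := by rw [mul_left_comm, ← Real.exp_add]; simp
    have h5 := integral_mono_of_nonneg (ae_of_all _ fun y => norm_nonneg _) ((int_scaled ha0).1.const_mul (4 / (a ^ 2 * X ^ 2))) (ae_of_all _ hb)
    refine h5.trans (le_of_eq ?_)
    rw [integral_const_mul, (int_scaled ha0).2]
    field_simp
  have ht : Tendsto (fun X : ℝ => 4 * π / (a ^ 3) / X ^ 2) atTop (nhds 0) :=
    Tendsto.div_atTop tendsto_const_nhds (tendsto_pow_atTop (by norm_num))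
  have := ge_of_tendsto ht (by filter_upwards [eventually_gt_atTop 0] with X hX using key X hX)
  exact norm_le_zero_iff.1 this

/-- Dirichlet polynomial -/
def DP (a e t : ℝ) : ℂ := ∑ n ∈ Finset.Icc 1 ⌊Real.exp (4 * a)⌋₊,
  (ArithmeticFunction.vonMangoldt n : ℂ) * wt a n * (n : ℂ) ^ (-(1 / 2 + e + t * Complex.I))

lemma DP_eq {a e t : ℝ} (ha : 1 / 8 ≤ a) (he : 0 < e) (he1 : e ≤ 1 / 4) :
    ∫ y : ℝ, LSeries (fun n => (ArithmeticFunction.vonMangoldt n : ℂ)) (2 + (t + y : ℝ) * Complex.I) *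
      Kf a ((3 / 2 - e : ℝ) + y * Complex.I) = DP a e t := by
  set β : ℝ := 3 / 2 - e with hβ
  have hβ0 : 0 ≤ β := by linarith
  set f : ℕ → ℂ := fun n => (ArithmeticFunction.vonMangoldt n : ℂ) with hf
  have hKi : Integrable (fun y : ℝ => Kf a (β + y * Complex.I)) :=
    vert_integrable (B := 16384 * Real.exp (4 * a * |β|)) (fun s _ => (Kf_diff a s).continuousAt) (fun y => by
      refine (Kf_bound ha β y).trans ?_
      have : 1 + y ^ 2 ≤ (1 + y ^ 2) ^ 2 := by nlinarith [sq_nonneg y]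
      gcongr)
  have hcont : ∀ n : ℕ, Continuous fun y : ℝ => LSeries.term f (2 + (t + y : ℝ) * Complex.I) n := by
    intro n
    rcases Nat.eq_zero_or_pos n with rfl | hn
    · simp [LSeries.term]; exact continuous_const
    · have hn0 : (n:ℂ) ≠ 0 := by exact_mod_cast hn.ne'
      simp only [LSeries.term, hn.ne', if_false]
      apply Continuous.div continuous_const
      · apply Continuous.const_cpow (by fun_prop) (Or.inl hn0)
      · intro y h; rw [Complex.cpow_eq_zero_iff] at h; exact hn0 h.1
  have hnorm : ∀ (n : ℕ) (y : ℝ), ‖LSeries.term f (2 + (t + y : ℝ) * Complex.I) n‖ = ‖LSeries.term f 2 n‖ := by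
    intro n y
    rw [LSeries.norm_term_eq, LSeries.norm_term_eq]; simp
  have hint : ∀ n : ℕ, Integrable fun y : ℝ => LSeries.term f (2 + (t + y : ℝ) * Complex.I) n * Kf a (β + y * Complex.I) := by
    intro n
    refine hKi.bdd_mul (c := ‖LSeries.term f 2 n‖) (hcont n).aestronglyMeasurable (ae_of_all _ fun y => (hnorm n y).le)
  have hsum : Summable fun n : ℕ => ∫ y : ℝ, ‖LSeries.term f (2 + (t + y : ℝ) * Complex.I) n * Kf a (β + y * Complex.I)‖ := by
    have h1 : Summable (fun n => LSeries.term f 2 n) := ArithmeticFunction.LSeriesSummable_vonMangoldt (s := 2) (by norm_num)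
    simp only [norm_mul, hnorm, integral_const_mul]
    exact h1.norm.mul_right _
  have h2 := hasSum_integral_of_summable_integral_norm hint hsum
  have e0 : ∀ n : ℕ, 1 ≤ n → (∫ y : ℝ, LSeries.term f (2 + (t + y : ℝ) * Complex.I) n * Kf a (β + y * Complex.I)) =
      (ArithmeticFunction.vonMangoldt n : ℂ) * wt a n * (n : ℂ) ^ (-(1 / 2 + e + t * Complex.I)) := by
    intro n hn
    have hn0 : (n:ℂ) ≠ 0 := by exact_mod_cast (by omega : n ≠ 0)
    rw [wt_shift ha hn hβ0, mul_right_comm, ← integral_const_mul]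
    refine integral_congr_ae (ae_of_all _ fun y => ?_)
    have hn' : n ≠ 0 := by omega
    simp only [LSeries.term, if_neg hn', hf]
    have : (2 + (t + y : ℝ) * Complex.I : ℂ) = (1 / 2 + e + t * Complex.I) + (β + y * Complex.I) := by
      rw [hβ]; push_cast; ring
    rw [this, Complex.cpow_neg, Complex.cpow_neg, Complex.cpow_add _ _ hn0]
    field_simp
  have e1 : ∀ n : ℕ, n ∉ Finset.Icc 1 ⌊Real.exp (4 * a)⌋₊ → (∫ y : ℝ, LSeries.term f (2 + (t + y : ℝ) * Complex.I) n * Kf a (β + y * Complex.I)) = 0 := by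
    intro n hn
    rcases Nat.eq_zero_or_pos n with rfl | hn1
    · simp [LSeries.term]
    · rw [e0 n hn1]
      have h3 : ⌊Real.exp (4 * a)⌋₊ < n := by
        by_contra hh
        exact hn (Finset.mem_Icc.2 ⟨hn1, by omega⟩)
      have h4 : Real.exp (4 * a) < n := (Nat.floor_lt (Real.exp_nonneg _)).1 h3
      rw [wt_zero ha hn1 ((Real.le_log_iff_exp_le (by exact_mod_cast hn1)).2 h4.le)]
      simp
  have h3 : HasSum (fun n : ℕ => ∫ y : ℝ, LSeries.term f (2 + (t + y : ℝ) * Complex.I) n * Kf a (β + y * Complex.I)) (∑ n ∈ Finset.Icc 1 ⌊Real.exp (4 * a)⌋₊, ∫ y : ℝ, LSeries.term f (2 + (t + y : ℝ) * Complex.I) n * Kf a (β + y * Complex.I)) := hasSum_sum_of_ne_finset_zero e1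
  have h4 := h2.unique h3
  rw [DP, ← Finset.sum_congr rfl (fun n hn => e0 n (Finset.mem_Icc.1 hn).1), ← h4]
  refine integral_congr_ae (ae_of_all _ fun y => ?_)
  simp only [LSeries]
  rw [tsum_mul_right]

lemma pole_bound {a e t : ℝ} (ha : 1 / 8 ≤ a) (he : 0 < e) (he1 : e ≤ 1 / 4) (ht : 0 < t) :
    Integrable (fun y : ℝ => 1 / ((2 + (t + y : ℝ) * Complex.I : ℂ) - 1) * Kf a ((3 / 2 - e : ℝ) + y * Complex.I)) ∧
    ‖∫ y : ℝ, 1 / ((2 + (t + y : ℝ) * Complex.I : ℂ) - 1) * Kf a ((3 / 2 - e : ℝ) + y * Complex.I)‖ ≤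
      32768 * π * Real.exp (6 * a) / t := by
  have hb : ∀ y : ℝ, ‖1 / ((2 + (t + y : ℝ) * Complex.I : ℂ) - 1) * Kf a ((3 / 2 - e : ℝ) + y * Complex.I)‖ ≤
      32768 * Real.exp (6 * a) / t * (1 + y ^ 2)⁻¹ := by
    intro y
    have h1 := Kf_bound ha (3 / 2 - e) y
    have h5 : Real.exp (4 * a * |3 / 2 - e|) ≤ Real.exp (6 * a) := by
      apply Real.exp_le_exp.2
      rw [abs_of_nonneg (by linarith)]
      nlinarith
    set D := ‖(2 + (t + y : ℝ) * Complex.I : ℂ) - 1‖ with hD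
    have hD1 : 1 ≤ D := by
      have := Complex.re_le_norm ((2 + (t + y : ℝ) * Complex.I : ℂ) - 1)
      have h2 : ((2 + (t + y : ℝ) * Complex.I : ℂ) - 1).re = 1 := by simp; norm_num
      rw [h2] at this
      exact this
    have hD2 : |t + y| ≤ D := by
      have := Complex.abs_im_le_norm ((2 + (t + y : ℝ) * Complex.I : ℂ) - 1)
      simpa [hD] using this
    have hD3 : t ≤ 2 * D * (1 + y ^ 2) := by
      have h6 : t ≤ |t + y| + |y| := by
        have := le_abs_self (t + y); have := neg_le_abs y; linarith
      have h4 : 1 + |y| ≤ 2 * (1 + y ^ 2) := by nlinarith [sq_abs y, sq_nonneg (|y| - 1)]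
      nlinarith [abs_nonneg y]
    rw [norm_mul, norm_div, norm_one]
    have h7 : 1 / D ≤ 2 * (1 + y ^ 2) / t := by
      rw [div_le_div_iff₀ (by linarith) ht]; linarith
    calc _ ≤ (2 * (1 + y ^ 2) / t) * (16384 * Real.exp (6 * a) / (1 + y ^ 2) ^ 2) := by
          gcongr
          exact h1.trans (by gcongr)
      _ = _ := by field_simp; norm_num
  have hi := integrable_inv_one_add_sq.const_mul (32768 * Real.exp (6 * a) / t)
  constructor
  · refine hi.mono' ?_ (ae_of_all _ hb)
    apply Continuous.aestronglyMeasurable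
    apply Continuous.mul
    · apply Continuous.div continuous_const (by fun_prop)
      intro y h
      have := congrArg Complex.re h
      simp at this
      norm_num at this
    · have := (Kf_diff a).continuous
      fun_prop
  · refine (norm_integral_le_of_norm_le hi (ae_of_all _ hb)).trans (le_of_eq ?_)
    rw [integral_const_mul, integral_univ_inv_one_add_sq]; ring

lemma explicit_bound (hRH : RiemannHypothesis) (S : Finset ℝ) {a e t : ℝ} (ha : 1 / 8 ≤ a) (he : e = 1 / (32 * a)) (ht : 0 < t) :
    1 / 5 * ∑ γ ∈ S with |γ - t| ≤ e, (ordMult γ : ℝ) ≤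
      ‖DP a e t‖ + 32768 * π * Real.exp (6 * a) / t + 216 * (π / a) * Real.log (|t| + 4) := by
  have ha0 : 0 < a := by linarith
  have he0 : 0 < e := by rw [he]; positivity
  have he1 : e ≤ 1 / 4 := by
    rw [he, div_le_div_iff₀ (by positivity) (by norm_num)]; linarith
  obtain ⟨i1, e1⟩ := shift_main hRH (t := t) ha he0 he1
  obtain ⟨i2, b2⟩ := pole_bound (t := t) ha he0 he1 ht
  have i3 : Integrable (fun y : ℝ => logDeriv riemannZeta₁ (2 + (t + y : ℝ) * Complex.I) * Kf a ((3 / 2 - e : ℝ) + y * Complex.I)) := by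
    obtain ⟨B, hB⟩ := line_bound hRH (t := t) ha he0 he1
    have := vert_integrable (G := fun s => logDeriv riemannZeta₁ (s + (1 / 2 + e + t * Complex.I)) * Kf a s) (α := 3 / 2 - e) (B := B) (by
      intro s hs
      refine ContinuousAt.mul ?_ (Kf_diff a s).continuousAt
      have := (logDeriv_zeta1_diff hRH (s := s + (1 / 2 + e + t * Complex.I)) (by simp; linarith)).continuousAt
      exact ContinuousAt.comp (f := fun s : ℂ => s + (1 / 2 + e + t * Complex.I)) this (by fun_prop)) (fun y => hB _ y (by linarith) le_rfl)
    refine this.congr (ae_of_all _ fun y => ?_)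
    simp only
    congr 2
    push_cast; ring
  have e2 : ∫ y : ℝ, logDeriv riemannZeta₁ (2 + (t + y : ℝ) * Complex.I) * Kf a ((3 / 2 - e : ℝ) + y * Complex.I) =
      (∫ y : ℝ, 1 / ((2 + (t + y : ℝ) * Complex.I : ℂ) - 1) * Kf a ((3 / 2 - e : ℝ) + y * Complex.I)) - DP a e t := by
    rw [← DP_eq ha he0 he1]
    have : ∀ y : ℝ, LSeries (fun n => (ArithmeticFunction.vonMangoldt n : ℂ)) (2 + (t + y : ℝ) * Complex.I) *
      Kf a ((3 / 2 - e : ℝ) + y * Complex.I) = 1 / ((2 + (t + y : ℝ) * Complex.I : ℂ) - 1) * Kf a ((3 / 2 - e : ℝ) + y * Complex.I) - logDeriv riemannZeta₁ (2 + (t + y : ℝ) * Complex.I) * Kf a ((3 / 2 - e : ℝ) + y * Complex.I) := by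
      intro y
      rw [logDeriv_zeta1_eq (by simp)]; ring
    simp only [this]
    rw [integral_sub i2 i3]; ring
  set I := ∫ y : ℝ, logDeriv riemannZeta₁ (1 / 2 + e + (t + y : ℝ) * Complex.I) * (kr a y : ℂ) with hI
  have hIle : I.re ≤ ‖DP a e t‖ + 32768 * π * Real.exp (6 * a) / t := by
    refine (Complex.re_le_norm I).trans ?_
    rw [e1, e2]
    refine (norm_sub_le _ _).trans ?_
    linarith
  have hIre : I.re = ∫ y : ℝ, (logDeriv riemannZeta₁ (1 / 2 + e + (t + y : ℝ) * Complex.I)).re * kr a y := by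
    have := integral_re i1
    rw [hI]
    simp only [RCLike.re_eq_complex_re] at this
    rw [← this]
    refine integral_congr_ae (ae_of_all _ fun y => ?_)
    simp
  have i4 : Integrable (fun y : ℝ => (logDeriv riemannZeta₁ (1 / 2 + e + (t + y : ℝ) * Complex.I)).re * kr a y) := by
    refine i1.re.congr (ae_of_all _ fun y => ?_)
    simp
  have i5 := (kr_int ha).1.const_mul (6 * Real.log (|t| + 4))
  set M := ∑ γ ∈ S with |γ - t| ≤ e, (ordMult γ : ℝ) with hM
  have hM0 : 0 ≤ M := Finset.sum_nonneg fun _ _ => by positivity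
  have hpt : ∀ y : ℝ, (Set.Icc (-e) e).indicator (fun _ => M * (1 / (10 * e))) y ≤
      (logDeriv riemannZeta₁ (1 / 2 + e + (t + y : ℝ) * Complex.I)).re * kr a y + 6 * Real.log (|t| + 4) * (kr a y * (1 + |y|)) := by
    intro y
    have z := zeros_sum_le hRH S (s := 1 / 2 + e + (t + y : ℝ) * Complex.I) (by simp; linarith) (by simp; linarith)
    have hre : (1 / 2 + e + (t + y : ℝ) * Complex.I : ℂ).re - 1 / 2 = e := by simp
    have him : (1 / 2 + e + (t + y : ℝ) * Complex.I : ℂ).im = t + y := by simp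
    rw [hre, him] at z
    have hk := kr_nonneg a y
    have hl := log4_add t y
    have h1 : (∑ γ ∈ S, (ordMult γ : ℝ) * (e / (e ^ 2 + (t + y - γ) ^ 2))) * kr a y ≤
      (logDeriv riemannZeta₁ (1 / 2 + e + (t + y : ℝ) * Complex.I)).re * kr a y + 6 * Real.log (|t| + 4) * (kr a y * (1 + |y|)) := by
      calc _ ≤ ((logDeriv riemannZeta₁ (1 / 2 + e + (t + y : ℝ) * Complex.I)).re + 6 * Real.log (|t + y| + 4)) * kr a y := by gcongr
        _ ≤ ((logDeriv riemannZeta₁ (1 / 2 + e + (t + y : ℝ) * Complex.I)).re + 6 * (Real.log (|t| + 4) * (1 + |y|))) * kr a y := by gcongr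
        _ = _ := by ring
    refine le_trans ?_ h1
    by_cases hy : y ∈ Set.Icc (-e) e
    · rw [Set.indicator_of_mem hy]
      have hya : |y| ≤ e := abs_le.2 hy
      have hk2 := kr_lower ha (he ▸ hya)
      have h2 : M * (1 / (5 * e)) ≤ ∑ γ ∈ S, (ordMult γ : ℝ) * (e / (e ^ 2 + (t + y - γ) ^ 2)) := by
        rw [hM, Finset.sum_mul]
        refine le_trans (Finset.sum_le_sum fun γ hγ => ?_) (Finset.sum_le_sum_of_subset_of_nonneg (Finset.filter_subset _ S) fun γ _ _ => by positivity)
        have hγ2 := (Finset.mem_filter.1 hγ).2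
        have h3 : |t + y - γ| ≤ 2 * e := by
          have := abs_sub y (γ - t)
          rw [show y - (γ - t) = t + y - γ by ring] at this
          linarith
        have h4 : (t + y - γ) ^ 2 ≤ 4 * e ^ 2 := by
          have := pow_le_pow_left₀ (abs_nonneg _) h3 2
          rw [sq_abs] at this
          linarith
        apply mul_le_mul_of_nonneg_left _ (by positivity)
        rw [div_le_div_iff₀ (by positivity) (by positivity)]
        nlinarith
      calc M * (1 / (10 * e)) = M * (1 / (5 * e)) * (1 / 2) := by field_simp; ring
        _ ≤ _ := by gcongr
    · rw [Set.indicator_of_notMem hy]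
      apply mul_nonneg _ hk
      exact Finset.sum_nonneg fun _ _ => by positivity
  have h6 := integral_mono ((integrable_indicator_iff measurableSet_Icc).2 (integrableOn_const (C := M * (1 / (10 * e))) (by simp) enorm_ne_top)) (i4.add i5) hpt
  rw [integral_indicator measurableSet_Icc, setIntegral_const] at h6
  have h7 : ∫ y : ℝ, ((logDeriv riemannZeta₁ (1 / 2 + e + (t + y : ℝ) * Complex.I)).re * kr a y + 6 * Real.log (|t| + 4) * (kr a y * (1 + |y|))) =
      I.re + 6 * Real.log (|t| + 4) * ∫ y, (kr a y * (1 + |y|)) := by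
    rw [integral_add i4 i5, hIre, integral_const_mul]
  have h8 : volume.real (Set.Icc (-e) e) = 2 * e := by
    simp [Measure.real]; rw [ENNReal.toReal_ofReal (by linarith)]; ring
  rw [h8, smul_eq_mul] at h6
  have h9 : 2 * e * (M * (1 / (10 * e))) = 1 / 5 * M := by field_simp; ring
  rw [h9] at h6
  refine h6.trans ?_
  refine (le_of_eq h7).trans ?_
  have h10 := (kr_int ha).2
  have h11 := one_le_log4 t
  have : 6 * Real.log (|t| + 4) * ∫ y, (kr a y * (1 + |y|)) ≤ 6 * Real.log (|t| + 4) * (36 * (π / a)) := by gcongr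
  linarith

lemma vm_sum {N : ℕ} (hN : 1 ≤ N) :
    ∑ n ∈ Finset.Icc 1 N, ArithmeticFunction.vonMangoldt n / (n : ℝ) ≤ 2 * Real.log N := by
  have hN0 : (0:ℝ) < N := by exact_mod_cast hN
  have h1 : ∀ n ∈ Finset.Icc 1 N, (N:ℝ) * (ArithmeticFunction.vonMangoldt n / (n : ℝ)) ≤
      2 * ∑ m ∈ Finset.Icc 1 N, if n ∣ m then ArithmeticFunction.vonMangoldt n else 0 := by
    intro n hn
    obtain ⟨hn1, hn2⟩ := Finset.mem_Icc.1 hn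
    have hn0 : (0:ℝ) < n := by exact_mod_cast hn1
    rw [← Finset.sum_filter, Finset.sum_const, nsmul_eq_mul]
    have hc : (Finset.filter (fun m => n ∣ m) (Finset.Icc 1 N)).card = N / n := by
      rw [← Nat.Ioc_filter_dvd_card_eq_div]; rfl
    rw [hc]
    have h2 : N ≤ 2 * (N / n) * n := by
      have := Nat.div_add_mod N n
      have h3 := Nat.mod_lt N hn1
      have h4 : 1 ≤ N / n := (Nat.one_le_div_iff hn1).2 hn2
      nlinarith
    have h3 : (N:ℝ) ≤ 2 * ((N / n : ℕ) : ℝ) * n := by exact_mod_cast h2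
    have h4 : 0 ≤ ArithmeticFunction.vonMangoldt n := ArithmeticFunction.vonMangoldt_nonneg
    rw [← mul_div_assoc, div_le_iff₀ hn0]
    nlinarith
  have h5 : ∀ m ∈ Finset.Icc 1 N, (∑ n ∈ Finset.Icc 1 N, if n ∣ m then ArithmeticFunction.vonMangoldt n else 0) ≤ Real.log N := by
    intro m hm
    obtain ⟨hm1, hm2⟩ := Finset.mem_Icc.1 hm
    rw [← Finset.sum_filter]
    have h6 : Finset.filter (fun n => n ∣ m) (Finset.Icc 1 N) = m.divisors := by
      ext n
      simp only [Finset.mem_filter, Finset.mem_Icc, Nat.mem_divisors]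
      constructor
      · rintro ⟨_, h⟩; exact ⟨h, by omega⟩
      · rintro ⟨h, _⟩
        exact ⟨⟨Nat.pos_of_dvd_of_pos h hm1, (Nat.le_of_dvd hm1 h).trans hm2⟩, h⟩
    rw [h6, ArithmeticFunction.vonMangoldt_sum]
    exact Real.log_le_log (by exact_mod_cast hm1) (by exact_mod_cast hm2)
  have h7 : (N:ℝ) * ∑ n ∈ Finset.Icc 1 N, ArithmeticFunction.vonMangoldt n / (n : ℝ) ≤ N * (2 * Real.log N) := by
    rw [Finset.mul_sum]
    refine (Finset.sum_le_sum h1).trans ?_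
    rw [← Finset.mul_sum, Finset.sum_comm]
    have := Finset.sum_le_sum h5
    simp only [Finset.sum_const, Nat.card_Icc, nsmul_eq_mul, Nat.add_sub_cancel] at this
    linarith
  exact le_of_mul_le_mul_left h7 hN0

lemma dir_pow (f : ℕ → ℂ) {W : ℝ} (hW : 0 ≤ W) (N : ℕ) (hN : 1 ≤ N)
    (hf : ∀ n, 1 ≤ n → ‖f n‖ ≤ W * ArithmeticFunction.vonMangoldt n) (k : ℕ) :
    ∃ (b : ℕ → ℂ) (B : ℕ → ℝ),
      (∀ s : ℂ, (∑ n ∈ Finset.Icc 1 N, f n * (n : ℂ) ^ (-s)) ^ k = ∑ n ∈ Finset.Icc 1 (N ^ k), b n * (n : ℂ) ^ (-s)) ∧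
      (∀ n, 0 ≤ B n) ∧ (∀ n, ‖b n‖ ≤ W ^ k * B n) ∧ (∀ n, 1 ≤ n → B n ≤ Real.log n ^ k) ∧
      ∑ n ∈ Finset.Icc 1 (N ^ k), B n / n ≤ (∑ n ∈ Finset.Icc 1 N, ArithmeticFunction.vonMangoldt n / (n : ℝ)) ^ k := by
  have vn : ∀ n, 0 ≤ ArithmeticFunction.vonMangoldt n := fun n => ArithmeticFunction.vonMangoldt_nonneg
  induction k with
  | zero =>
    refine ⟨fun _ => 1, fun _ => 1, fun s => ?_, fun n => by norm_num, fun n => by norm_num, fun n _ => by norm_num, ?_⟩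
    · simp
    · simp
  | succ k ih =>
    obtain ⟨b, B, h1, h2, h3, h4, h5⟩ := ih
    set A := Finset.Icc 1 N ×ˢ Finset.Icc 1 (N ^ k) with hA
    have hmap : ∀ p ∈ A, p.1 * p.2 ∈ Finset.Icc 1 (N ^ (k + 1)) := by
      intro p hp
      simp only [hA, Finset.mem_product, Finset.mem_Icc] at hp
      rw [Finset.mem_Icc, pow_succ']
      exact ⟨Nat.mul_pos hp.1.1 hp.2.1, Nat.mul_le_mul hp.1.2 hp.2.2⟩
    refine ⟨fun n => ∑ p ∈ A with p.1 * p.2 = n, f p.1 * b p.2,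
      fun n => ∑ p ∈ A with p.1 * p.2 = n, ArithmeticFunction.vonMangoldt p.1 * B p.2, fun s => ?_, fun n => ?_, fun n => ?_, fun n hn => ?_, ?_⟩
    · rw [pow_succ', h1, Finset.sum_mul_sum, ← Finset.sum_product', ← hA, ← Finset.sum_fiberwise_of_maps_to hmap]
      refine Finset.sum_congr rfl fun n hn => ?_
      rw [Finset.sum_mul]
      refine Finset.sum_congr rfl fun p hp => ?_
      obtain ⟨_, hp⟩ := Finset.mem_filter.1 hp
      rw [← hp, Nat.cast_mul, Complex.natCast_mul_natCast_cpow]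
      ring
    · exact Finset.sum_nonneg fun p _ => mul_nonneg (vn _) (h2 _)
    · refine (norm_sum_le _ _).trans ?_
      rw [Finset.mul_sum]
      refine Finset.sum_le_sum fun p hp => ?_
      have hp1 : 1 ≤ p.1 := by
        have := (Finset.mem_filter.1 hp).1
        simp only [hA, Finset.mem_product, Finset.mem_Icc] at this
        exact this.1.1
      rw [norm_mul]
      calc _ ≤ (W * ArithmeticFunction.vonMangoldt p.1) * (W ^ k * B p.2) :=
            mul_le_mul (hf _ hp1) (h3 _) (norm_nonneg _) (mul_nonneg hW (vn _))
        _ = _ := by ring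
    · have hn0 : n ≠ 0 := by omega
      have hl : 0 ≤ Real.log n := Real.log_natCast_nonneg n
      calc ∑ p ∈ A with p.1 * p.2 = n, ArithmeticFunction.vonMangoldt p.1 * B p.2
          ≤ ∑ p ∈ A with p.1 * p.2 = n, ArithmeticFunction.vonMangoldt p.1 * Real.log n ^ k := by
            refine Finset.sum_le_sum fun p hp => ?_
            obtain ⟨hp0, hpn⟩ := Finset.mem_filter.1 hp
            simp only [hA, Finset.mem_product, Finset.mem_Icc] at hp0
            refine mul_le_mul_of_nonneg_left ((h4 _ hp0.2.1).trans ?_) (vn _)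
            have hle : p.2 ≤ n := by rw [← hpn]; exact Nat.le_mul_of_pos_left _ hp0.1.1
            have : (0:ℝ) < p.2 := by exact_mod_cast hp0.2.1
            exact pow_le_pow_left₀ (Real.log_natCast_nonneg _) (Real.log_le_log this (by exact_mod_cast hle)) k
        _ = (∑ p ∈ A with p.1 * p.2 = n, ArithmeticFunction.vonMangoldt p.1) * Real.log n ^ k := by rw [Finset.sum_mul]
        _ ≤ (∑ p ∈ n.divisorsAntidiagonal, ArithmeticFunction.vonMangoldt p.1) * Real.log n ^ k := by
            refine mul_le_mul_of_nonneg_right ?_ (by positivity)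
            refine Finset.sum_le_sum_of_subset_of_nonneg ?_ fun _ _ _ => vn _
            intro p hp
            rw [Nat.mem_divisorsAntidiagonal]
            exact ⟨(Finset.mem_filter.1 hp).2, hn0⟩
        _ = Real.log n ^ (k + 1) := by
            rw [Nat.sum_divisorsAntidiagonal (f := fun i _ => ArithmeticFunction.vonMangoldt i), ArithmeticFunction.vonMangoldt_sum]; ring
    · rw [pow_succ' (∑ n ∈ Finset.Icc 1 N, _)]
      refine le_trans (le_of_eq ?_) (mul_le_mul_of_nonneg_left h5 (Finset.sum_nonneg fun n _ => div_nonneg (vn n) (Nat.cast_nonneg n)))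
      rw [Finset.sum_mul_sum, ← Finset.sum_product', ← hA, ← Finset.sum_fiberwise_of_maps_to hmap]
      refine Finset.sum_congr rfl fun n hn => ?_
      rw [Finset.sum_div]
      refine Finset.sum_congr rfl fun p hp => ?_
      obtain ⟨_, hp⟩ := Finset.mem_filter.1 hp
      rw [← hp, Nat.cast_mul]
      rw [div_mul_div_comm]

lemma log_sep {N m n : ℕ} (hm : 1 ≤ m) (hmN : m ≤ N) (hn : 1 ≤ n) (hnN : n ≤ N) (h : m ≠ n) :
    1 / (N:ℝ) ≤ |Real.log m - Real.log n| := by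
  wlog hlt : n < m generalizing m n
  · rw [abs_sub_comm]
    exact this hn hnN hm hmN h.symm (by omega)
  have hn0 : (0:ℝ) < n := by exact_mod_cast hn
  have hm0 : (0:ℝ) < m := by exact_mod_cast hm
  refine le_trans ?_ (le_abs_self _)
  have h1 := Real.one_sub_inv_le_log_of_pos (div_pos hm0 hn0)
  rw [Real.log_div hm0.ne' hn0.ne', inv_div] at h1
  refine le_trans ?_ h1
  have h2 : (n:ℝ) + 1 ≤ m := by exact_mod_cast hlt
  have h3 : (m:ℝ) ≤ N := by exact_mod_cast hmN
  calc 1 / (N:ℝ) ≤ 1 / m := by gcongr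
    _ ≤ 1 - n / m := by
      rw [one_sub_div hm0.ne']; gcongr; linarith

lemma mean_value (g : ℕ → ℂ) (N : ℕ) {α β : ℝ} (h : α ≤ β) :
    ∫ t in α..β, ‖∑ n ∈ Finset.Icc 1 N, g n * Complex.exp (-(t * Real.log n) * Complex.I)‖ ^ 2 ≤
      (β - α + 2 * N ^ 2) * ∑ n ∈ Finset.Icc 1 N, ‖g n‖ ^ 2 := by
  set S := Finset.Icc 1 N with hS
  have e1 : ∀ t : ℝ, ((‖∑ n ∈ S, g n * Complex.exp (-(t * Real.log n) * Complex.I)‖ ^ 2 : ℝ) : ℂ) =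
      ∑ m ∈ S, ∑ n ∈ S, g m * (starRingEnd ℂ) (g n) * Complex.exp ((((Real.log n - Real.log m : ℝ) : ℂ) * Complex.I) * t) := by
    intro t
    rw [Complex.ofReal_pow, ← Complex.mul_conj', map_sum, Finset.sum_mul_sum]
    refine Finset.sum_congr rfl fun m _ => Finset.sum_congr rfl fun n _ => ?_
    rw [map_mul, ← Complex.exp_conj, mul_mul_mul_comm, ← Complex.exp_add]
    congr 2
    simp only [map_mul, map_neg, Complex.conj_ofReal, Complex.conj_I, Complex.ofReal_sub]
    ring
  have hcont : ∀ m n : ℕ, Continuous fun t : ℝ => g m * (starRingEnd ℂ) (g n) * Complex.exp ((((Real.log n - Real.log m : ℝ) : ℂ) * Complex.I) * t) := by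
    intro m n; fun_prop
  have e2 : ((∫ t in α..β, ‖∑ n ∈ S, g n * Complex.exp (-(t * Real.log n) * Complex.I)‖ ^ 2 : ℝ) : ℂ) =
      ∑ m ∈ S, ∑ n ∈ S, g m * (starRingEnd ℂ) (g n) * ∫ t in α..β, Complex.exp ((((Real.log n - Real.log m : ℝ) : ℂ) * Complex.I) * t) := by
    rw [← intervalIntegral.integral_ofReal]
    simp only [e1]
    rw [intervalIntegral.integral_finsetSum fun m _ => (continuous_finsetSum _ fun n _ => hcont m n).intervalIntegrable _ _]
    refine Finset.sum_congr rfl fun m _ => ?_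
    rw [intervalIntegral.integral_finsetSum fun n _ => (hcont m n).intervalIntegrable _ _]
    refine Finset.sum_congr rfl fun n _ => ?_
    rw [intervalIntegral.integral_const_mul]
  have hb : ∀ m ∈ S, ∀ n ∈ S, ‖g m * (starRingEnd ℂ) (g n) * ∫ t in α..β, Complex.exp ((((Real.log n - Real.log m : ℝ) : ℂ) * Complex.I) * t)‖ ≤
      (if m = n then (β - α) * ‖g m‖ ^ 2 else 0) + 2 * N * (‖g m‖ * ‖g n‖) := by
    intro m hm n hn
    obtain ⟨hm1, hm2⟩ := Finset.mem_Icc.1 hm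
    obtain ⟨hn1, hn2⟩ := Finset.mem_Icc.1 hn
    rw [norm_mul, norm_mul, RCLike.norm_conj]
    split_ifs with hmn
    · subst hmn
      simp
      rw [← Complex.ofReal_sub, Complex.norm_real, Real.norm_of_nonneg (by linarith)]
      have : 0 ≤ 2 * N * (‖g m‖ * ‖g m‖) := by positivity
      nlinarith
    · rw [zero_add]
      have hs := log_sep hn1 hn2 hm1 hm2 (Ne.symm hmn)
      have hN0 : (0:ℝ) < N := by exact_mod_cast (by omega : 0 < N)
      set x : ℝ := Real.log n - Real.log m with hx
      have hx0 : 0 < |x| := lt_of_lt_of_le (by positivity) hs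
      have hc : ((x : ℂ) * Complex.I) ≠ 0 := by
        simp; exact abs_pos.1 hx0
      rw [integral_exp_mul_complex hc, norm_div]
      have hn2 : ‖Complex.exp ((x : ℂ) * Complex.I * β) - Complex.exp ((x : ℂ) * Complex.I * α)‖ ≤ 2 := by
        refine (norm_sub_le _ _).trans ?_
        rw [show (x : ℂ) * Complex.I * β = ((x * β : ℝ) : ℂ) * Complex.I by push_cast; ring,
          show (x : ℂ) * Complex.I * α = ((x * α : ℝ) : ℂ) * Complex.I by push_cast; ring,
          Complex.norm_exp_ofReal_mul_I, Complex.norm_exp_ofReal_mul_I]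
        norm_num
      have hn3 : ‖(x : ℂ) * Complex.I‖ = |x| := by simp
      rw [hn3]
      have : ‖Complex.exp ((x : ℂ) * Complex.I * β) - Complex.exp ((x : ℂ) * Complex.I * α)‖ / |x| ≤ 2 * N := by
        rw [div_le_iff₀ hx0]
        rw [div_le_iff₀ hN0] at hs
        nlinarith
      calc _ ≤ ‖g m‖ * ‖g n‖ * (2 * N) := by gcongr
        _ = _ := by ring
  have h3 : ∫ t in α..β, ‖∑ n ∈ S, g n * Complex.exp (-(t * Real.log n) * Complex.I)‖ ^ 2 ≤
      ∑ m ∈ S, ∑ n ∈ S, ((if m = n then (β - α) * ‖g m‖ ^ 2 else 0) + 2 * N * (‖g m‖ * ‖g n‖)) := by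
    refine (Real.le_norm_self _).trans ?_
    rw [← Complex.norm_real, e2]
    refine (norm_sum_le _ _).trans (Finset.sum_le_sum fun m hm => ?_)
    exact (norm_sum_le _ _).trans (Finset.sum_le_sum fun n hn => hb m hm n hn)
  refine h3.trans ?_
  have h4 : ∑ m ∈ S, ∑ n ∈ S, ((if m = n then (β - α) * ‖g m‖ ^ 2 else 0) + 2 * N * (‖g m‖ * ‖g n‖)) =
      (β - α) * ∑ m ∈ S, ‖g m‖ ^ 2 + 2 * N * (∑ m ∈ S, ‖g m‖) ^ 2 := by
    simp only [Finset.sum_add_distrib]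
    congr 1
    · rw [Finset.mul_sum]
      refine Finset.sum_congr rfl fun m hm => ?_
      rw [Finset.sum_ite_eq, if_pos hm]
    · rw [sq, Finset.sum_mul_sum, Finset.mul_sum]
      refine Finset.sum_congr rfl fun m hm => ?_
      rw [Finset.mul_sum]
  rw [h4]
  have h5 := sq_sum_le_card_mul_sum_sq (s := S) (f := fun m => ‖g m‖)
  have h6 : S.card = N := by simp [hS]
  rw [h6] at h5
  have : (2:ℝ) * N * (∑ m ∈ S, ‖g m‖) ^ 2 ≤ 2 * N * (N * ∑ m ∈ S, ‖g m‖ ^ 2) := by gcongr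
  linarith

lemma DP_cont (a e : ℝ) : Continuous (DP a e) := by
  unfold DP
  refine continuous_finsetSum _ fun n hn => ?_
  have hn0 : (n:ℂ) ≠ 0 := by
    have := (Finset.mem_Icc.1 hn).1
    exact_mod_cast (by omega : n ≠ 0)
  exact continuous_const.mul (Continuous.const_cpow (by fun_prop) (Or.inl hn0))

lemma DP_moment {a e : ℝ} (ha : 1 / 8 ≤ a) (he : 0 ≤ e) {α β : ℝ} (h : α ≤ β) (k : ℕ) :
    ∫ t in α..β, ‖DP a e t‖ ^ (2 * k) ≤ (β - α + 2 * Real.exp (8 * a * k)) * ((144 * π) ^ 2 * 2 * k) ^ k := by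
  have ha0 : 0 < a := by linarith
  set N := ⌊Real.exp (4 * a)⌋₊ with hN
  have hN1 : 1 ≤ N := Nat.le_floor (by simpa using Real.one_le_exp (by linarith : 0 ≤ 4 * a))
  have hN2 : (N : ℝ) ≤ Real.exp (4 * a) := Nat.floor_le (Real.exp_nonneg _)
  have hN0 : (0:ℝ) < N := by exact_mod_cast hN1
  have hlN : Real.log N ≤ 4 * a := (Real.log_le_iff_le_exp hN0).2 hN2
  have hlN0 : 0 ≤ Real.log N := Real.log_natCast_nonneg N
  set W := 36 * (π / a) with hW
  have hW0 : 0 ≤ W := by positivity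
  obtain ⟨b, B, h1, h2, h3, h4, h5⟩ := dir_pow (fun n => (ArithmeticFunction.vonMangoldt n : ℂ) * wt a n) hW0 N hN1 (by
    intro n hn
    rw [norm_mul, Complex.norm_real, Real.norm_of_nonneg ArithmeticFunction.vonMangoldt_nonneg, mul_comm]
    exact mul_le_mul_of_nonneg_right (wt_le ha hn) ArithmeticFunction.vonMangoldt_nonneg) k
  set g : ℕ → ℂ := fun n => b n * ((n : ℝ) ^ (-(1 / 2 + e)) : ℝ) with hg
  have e1 : ∀ t : ℝ, ‖DP a e t‖ ^ (2 * k) = ‖∑ n ∈ Finset.Icc 1 (N ^ k), g n * Complex.exp (-(t * Real.log n) * Complex.I)‖ ^ 2 := by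
    intro t
    rw [mul_comm 2 k, pow_mul, ← norm_pow, DP, ← hN, h1]
    congr 2
    refine Finset.sum_congr rfl fun n hn => ?_
    have hn1 := (Finset.mem_Icc.1 hn).1
    have hn0 : (n:ℂ) ≠ 0 := by exact_mod_cast (by omega : n ≠ 0)
    rw [hg]
    simp only
    rw [mul_assoc]
    congr 1
    rw [neg_add, Complex.cpow_add _ _ hn0, Complex.ofReal_cpow (Nat.cast_nonneg n)]
    congr 1
    · push_cast; rfl
    · rw [Complex.cpow_def_of_ne_zero hn0, ← Complex.natCast_log]
      congr 1; ring
  simp only [e1]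
  refine (mean_value g (N ^ k) h).trans ?_
  have hNk : (((N ^ k : ℕ) : ℝ)) ^ 2 ≤ Real.exp (8 * a * k) := by
    push_cast
    calc ((N:ℝ) ^ k) ^ 2 ≤ ((Real.exp (4 * a)) ^ k) ^ 2 := by gcongr
      _ = Real.exp (8 * a * k) := by
        rw [← pow_mul, ← Real.exp_nat_mul]; congr 1; push_cast; ring
  have hsum : ∑ n ∈ Finset.Icc 1 (N ^ k), ‖g n‖ ^ 2 ≤ ((144 * π) ^ 2 * 2 * k) ^ k := by
    have hterm : ∀ n ∈ Finset.Icc 1 (N ^ k), ‖g n‖ ^ 2 ≤ W ^ (2 * k) * (k * (4 * a)) ^ k * (B n / n) := by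
      intro n hn
      obtain ⟨hn1, hn2⟩ := Finset.mem_Icc.1 hn
      have hn0 : (0:ℝ) < n := by exact_mod_cast hn1
      have hn1' : (1:ℝ) ≤ n := by exact_mod_cast hn1
      have hp : ((n:ℝ) ^ (-(1 / 2 + e))) ^ 2 ≤ 1 / n := by
        have h1n : 1 / (n:ℝ) = (n:ℝ) ^ (-1 : ℝ) := by rw [Real.rpow_neg_one, one_div]
        rw [← Real.rpow_natCast, ← Real.rpow_mul hn0.le, h1n]
        apply Real.rpow_le_rpow_of_exponent_le hn1'
        push_cast; linarith
      have hlog : Real.log n ≤ k * (4 * a) := by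
        calc Real.log n ≤ Real.log ((N:ℝ) ^ k) := Real.log_le_log hn0 (by exact_mod_cast hn2)
          _ = k * Real.log N := Real.log_pow _ _
          _ ≤ _ := by gcongr
      have hB : B n ≤ (k * (4 * a)) ^ k := (h4 n hn1).trans (pow_le_pow_left₀ (Real.log_natCast_nonneg n) hlog k)
      rw [hg]
      simp only
      rw [norm_mul, mul_pow]
      rw [Complex.norm_real, Real.norm_of_nonneg (by positivity)]
      calc ‖b n‖ ^ 2 * ((n:ℝ) ^ (-(1 / 2 + e))) ^ 2 ≤ (W ^ k * B n) ^ 2 * (1 / n) := by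
            gcongr; exact h3 n
        _ = W ^ (2 * k) * B n * (B n / n) := by ring
        _ ≤ W ^ (2 * k) * (k * (4 * a)) ^ k * (B n / n) := by
            have := h2 n
            gcongr
    refine (Finset.sum_le_sum hterm).trans ?_
    rw [← Finset.mul_sum]
    have h6 : (∑ n ∈ Finset.Icc 1 N, ArithmeticFunction.vonMangoldt n / (n : ℝ)) ^ k ≤ (2 * (4 * a)) ^ k := by
      apply pow_le_pow_left₀ (Finset.sum_nonneg fun n _ => div_nonneg ArithmeticFunction.vonMangoldt_nonneg (Nat.cast_nonneg n))
      exact (vm_sum hN1).trans (by linarith)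
    calc _ ≤ W ^ (2 * k) * (k * (4 * a)) ^ k * (2 * (4 * a)) ^ k := by gcongr; exact h5.trans h6
      _ = _ := by
        rw [pow_mul, ← mul_pow, ← mul_pow, hW]
        congr 1; field_simp; ring
  have : 0 ≤ Real.exp (8 * a * k) := Real.exp_nonneg _
  gcongr

lemma DP_zero (e t : ℝ) : DP (1 / 8) e t = 0 := by
  unfold DP
  refine Finset.sum_eq_zero fun n hn => ?_
  obtain ⟨h1, h2⟩ := Finset.mem_Icc.1 hn
  have h3 : ⌊Real.exp (4 * (1 / 8))⌋₊ < 2 := by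
    rw [Nat.floor_lt (Real.exp_nonneg _)]
    rw [← Real.lt_log_iff_exp_lt (by norm_num)]
    have := Real.log_two_gt_d9
    push_cast
    linarith
  have h4 : n = 1 := by omega
  subst h4
  simp

lemma sum_window (S : Finset ℝ) (w : ℝ → ℝ) {G : ℝ → ℝ} (hG : Continuous G) {e α β : ℝ} (he : 0 < e) (hαβ : α ≤ β)
    (hS : ∀ γ ∈ S, α ≤ γ - e ∧ γ + e ≤ β)
    (hle : ∀ t, α ≤ t → t ≤ β → ∑ γ ∈ S with |γ - t| ≤ e, w γ ≤ G t) :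
    2 * e * ∑ γ ∈ S, w γ ≤ ∫ t in α..β, G t := by
  have h0 : ∀ γ : ℝ, Integrable ((Set.Icc (γ - e) (γ + e)).indicator (fun _ => w γ)) :=
    fun γ => (integrable_indicator_iff measurableSet_Icc).2 (integrableOn_const (by simp) enorm_ne_top)
  have h1 : ∀ γ ∈ S, ∫ t in Set.Icc α β, (Set.Icc (γ - e) (γ + e)).indicator (fun _ => w γ) t = 2 * e * w γ := by
    intro γ hγ
    obtain ⟨ha, hb⟩ := hS γ hγ
    rw [setIntegral_indicator measurableSet_Icc, Set.inter_eq_self_of_subset_right (Set.Icc_subset_Icc ha hb), setIntegral_const]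
    have : volume.real (Set.Icc (γ - e) (γ + e)) = 2 * e := by
      rw [Measure.real, Real.volume_Icc, ENNReal.toReal_ofReal (by linarith)]; ring
    rw [this, smul_eq_mul]
  rw [intervalIntegral.integral_of_le hαβ, ← integral_Icc_eq_integral_Ioc, Finset.mul_sum, ← Finset.sum_congr rfl h1,
    ← integral_finsetSum S fun γ _ => (h0 γ).integrableOn]
  refine setIntegral_mono_on (integrable_finsetSum S fun γ _ => (h0 γ).integrableOn) hG.continuousOn.integrableOn_Icc measurableSet_Icc ?_
  intro t ht
  refine le_trans (le_of_eq ?_) (hle t ht.1 ht.2)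
  rw [Finset.sum_filter]
  refine Finset.sum_congr rfl fun γ _ => ?_
  rw [Set.indicator_apply]
  congr 1
  rw [Set.mem_Icc, abs_le, eq_iff_iff]
  constructor
  · rintro ⟨h1, h2⟩; constructor <;> linarith
  · rintro ⟨h1, h2⟩; constructor <;> linarith

lemma sum_pow_le (S : Finset ℝ) (w : ℝ → ℝ) (hw : ∀ γ, 0 ≤ w γ) {n : ℕ} (hn : 1 ≤ n) :
    ∑ γ ∈ S, w γ ^ n ≤ (∑ γ ∈ S, w γ) ^ n := by
  obtain ⟨m, rfl⟩ : ∃ m, n = m + 1 := ⟨n - 1, by omega⟩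
  rw [pow_succ, Finset.mul_sum]
  refine Finset.sum_le_sum fun γ hγ => ?_
  rw [pow_succ]
  refine mul_le_mul_of_nonneg_right ?_ (hw γ)
  exact pow_le_pow_left₀ (hw γ) (Finset.single_le_sum (fun i _ => hw i) hγ) m

lemma block_bound (hRH : RiemannHypothesis) : ∃ E : ℝ, 1 ≤ E ∧ ∀ T : ℝ, 1 ≤ T → ∀ k : ℕ, 1 ≤ k → ∀ S : Finset ℝ,
    (∀ γ ∈ S, T / 2 ≤ γ ∧ γ ≤ T) → ∑ γ ∈ S, (ordMult γ : ℝ) ^ (2 * k) ≤ (E * k) ^ (2 * k) * (T * Real.log (T + 4)) := by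
  set H : ℝ := 5 * (658816 * π) with hH
  have hpi := Real.pi_gt_three
  have hH1 : 1 ≤ H := by rw [hH]; linarith
  refine ⟨400 * H, by linarith, ?_⟩
  intro T hT k hk S hS
  have hk1 : (1:ℝ) ≤ k := by exact_mod_cast hk
  set l := Real.log (T + 4) with hl
  have hl1 : 1 ≤ l := by
    rw [hl, Real.le_log_iff_exp_le (by linarith)]
    have := Real.exp_one_lt_d9
    linarith
  have hel : Real.exp l = T + 4 := Real.exp_log (by linarith)
  set a : ℝ := max (1 / 8) (l / (8 * k)) with ha'
  have ha : 1 / 8 ≤ a := le_max_left _ _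
  have ha0 : 0 < a := by linarith
  have hla : l / (8 * k) ≤ a := le_max_right _ _
  have hlk : l / (8 * k) ≤ l / 8 := by
    rw [div_le_div_iff₀ (by positivity) (by norm_num)]
    nlinarith
  have hal : a ≤ l / 8 := max_le (by linarith) hlk
  set e : ℝ := 1 / (32 * a) with he'
  have he0 : 0 < e := by positivity
  have he1 : e ≤ 1 / 4 := by
    rw [he', div_le_div_iff₀ (by positivity) (by norm_num)]; linarith
  set D : ℝ := (144 * π) ^ 2 * 2 with hD
  have hDH : 25 * D ≤ H ^ 2 := by
    rw [hD, hH]; nlinarith [sq_nonneg π]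
  have hD0 : 0 ≤ D := by positivity
  set α := T / 2 - e with hα
  set β := T + e with hβ
  have hαβ : α ≤ β := by linarith
  -- moment
  have hmom : ∫ t in α..β, ‖DP a e t‖ ^ (2 * k) ≤ 11 * T * (D * k) ^ k := by
    rcases le_total (l / (8 * k)) (1 / 8) with h | h
    · have : a = 1 / 8 := max_eq_left h
      rw [this]
      simp only [DP_zero, norm_zero, zero_pow (by omega : 2 * k ≠ 0), intervalIntegral.integral_zero]
      positivity
    · have hak : a = l / (8 * k) := max_eq_right h
      refine (DP_moment ha he0.le hαβ k).trans ?_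
      have h8 : 8 * a * k = l := by rw [hak]; field_simp
      rw [h8, hel]
      gcongr
      rw [hα, hβ]; linarith
  -- pointwise
  have hpt : ∀ t, α ≤ t → t ≤ β → ∑ γ ∈ S with |γ - t| ≤ e, (ordMult γ : ℝ) ^ (2 * k) ≤
      2 ^ (2 * k - 1) * ((5 * ‖DP a e t‖) ^ (2 * k) + (H * k) ^ (2 * k)) := by
    intro t h1 h2
    have ht : T / 4 ≤ t := by rw [hα] at h1; linarith
    have ht0 : 0 < t := by linarith
    have hb := explicit_bound hRH S ha he' ht0
    refine (sum_pow_le _ _ (fun _ => Nat.cast_nonneg _) (by omega)).trans ?_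
    have hM0 : 0 ≤ ∑ γ ∈ S with |γ - t| ≤ e, (ordMult γ : ℝ) := Finset.sum_nonneg fun _ _ => by positivity
    have hM : ∑ γ ∈ S with |γ - t| ≤ e, (ordMult γ : ℝ) ≤ 5 * ‖DP a e t‖ + H * k := by
      have p1 : 32768 * π * Real.exp (6 * a) / t ≤ 655360 * π := by
        rw [div_le_iff₀ ht0]
        have : Real.exp (6 * a) ≤ T + 4 := by
          rw [← hel]; apply Real.exp_le_exp.2; linarith
        have h3 : Real.exp (6 * a) ≤ 20 * t := by linarith
        nlinarith
      have p2 : Real.log (|t| + 4) ≤ 2 * l := by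
        rw [abs_of_pos ht0, hl, ← Real.log_rpow (by linarith)]
        apply Real.log_le_log (by linarith)
        norm_num
        rw [hβ] at h2
        nlinarith
      have p3 : 216 * (π / a) * Real.log (|t| + 4) ≤ 3456 * π * k := by
        have : l ≤ 8 * k * a := by
          rw [div_le_iff₀ (by positivity)] at hla; linarith
        calc 216 * (π / a) * Real.log (|t| + 4) ≤ 216 * (π / a) * (2 * (8 * k * a)) := by gcongr; linarith
          _ = _ := by field_simp; ring
      have p4 : 655360 * π ≤ 655360 * π * k := by
        have : 0 ≤ 655360 * π := by positivity
        nlinarith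
      rw [hH]; linarith
    refine (pow_le_pow_left₀ hM0 hM _).trans ?_
    exact add_pow_le (by positivity) (by positivity) _
  have hc : Continuous fun t => 2 ^ (2 * k - 1) * ((5 * ‖DP a e t‖) ^ (2 * k) + (H * k) ^ (2 * k)) := by
    have := DP_cont a e
    fun_prop
  have hw := sum_window S (fun γ => (ordMult γ : ℝ) ^ (2 * k)) hc he0 hαβ (fun γ hγ => by
    have := hS γ hγ
    constructor
    · rw [hα]; linarith
    · rw [hβ]; linarith) hpt
  have hint : ∫ t in α..β, 2 ^ (2 * k - 1) * ((5 * ‖DP a e t‖) ^ (2 * k) + (H * k) ^ (2 * k)) ≤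
      2 ^ (2 * k - 1) * (12 * T * (H * k) ^ (2 * k)) := by
    rw [intervalIntegral.integral_const_mul]
    refine mul_le_mul_of_nonneg_left ?_ (by positivity)
    have hc2 : Continuous fun t => ‖DP a e t‖ ^ (2 * k) := by
      have := DP_cont a e
      fun_prop
    simp only [mul_pow (5:ℝ)]
    have i1 : IntervalIntegrable (fun t => (5:ℝ) ^ (2 * k) * ‖DP a e t‖ ^ (2 * k)) volume α β := (continuous_const.mul hc2).intervalIntegrable _ _
    have i2 : IntervalIntegrable (fun _ : ℝ => (H * k) ^ (2 * k)) volume α β := continuous_const.intervalIntegrable _ _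
    rw [intervalIntegral.integral_add i1 i2, intervalIntegral.integral_const_mul,
      intervalIntegral.integral_const, smul_eq_mul]
    have q1 : (5:ℝ) ^ (2 * k) * (11 * T * (D * k) ^ k) ≤ 11 * T * (H * k) ^ (2 * k) := by
      have : (5:ℝ) ^ (2 * k) * (D * k) ^ k ≤ (H * k) ^ (2 * k) := by
        rw [pow_mul, pow_mul, ← mul_pow]
        apply pow_le_pow_left₀ (by positivity)
        have : (k:ℝ) ≤ k ^ 2 := by nlinarith
        calc (5:ℝ) ^ 2 * (D * k) = 25 * D * k := by ring
          _ ≤ H ^ 2 * k ^ 2 := by gcongr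
          _ = _ := by ring
      calc _ = 11 * T * ((5:ℝ) ^ (2 * k) * (D * k) ^ k) := by ring
        _ ≤ _ := by gcongr
    have q2 : (β - α) * (H * k) ^ (2 * k) ≤ T * (H * k) ^ (2 * k) := by
      gcongr
      rw [hα, hβ]; linarith
    have q3 : (5:ℝ) ^ (2 * k) * ∫ t in α..β, ‖DP a e t‖ ^ (2 * k) ≤ 5 ^ (2 * k) * (11 * T * (D * k) ^ k) := by gcongr
    linarith
  have hfin := hw.trans hint
  have h16 : ∑ γ ∈ S, (ordMult γ : ℝ) ^ (2 * k) ≤ 16 * a * (2 ^ (2 * k - 1) * (12 * T * (H * k) ^ (2 * k))) := by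
    have h2e : 16 * a * (2 * e) = 1 := by rw [he']; field_simp; norm_num
    calc _ = 16 * a * (2 * e * ∑ γ ∈ S, (ordMult γ : ℝ) ^ (2 * k)) := by rw [← mul_assoc, h2e, one_mul]
      _ ≤ _ := by gcongr
  refine h16.trans ?_
  have r1 : (2:ℝ) ^ (2 * k - 1) ≤ 2 ^ (2 * k) := pow_le_pow_right₀ (by norm_num) (by omega)
  have r2 : (200:ℝ) ≤ 200 ^ (2 * k) := le_self_pow₀ (by norm_num) (by omega)
  calc 16 * a * (2 ^ (2 * k - 1) * (12 * T * (H * k) ^ (2 * k)))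
      ≤ 16 * (l / 8) * (2 ^ (2 * k) * (12 * T * (H * k) ^ (2 * k))) := by gcongr
    _ = 24 * (2 ^ (2 * k) * (H * k) ^ (2 * k)) * (T * l) := by ring
    _ ≤ 200 ^ (2 * k) * (2 ^ (2 * k) * (H * k) ^ (2 * k)) * (T * l) := by gcongr; linarith
    _ = (400 * H * k) ^ (2 * k) * (T * l) := by
      rw [← mul_pow, ← mul_pow]; congr 2; ring

lemma base_bound (hRH : RiemannHypothesis) : ∃ E : ℝ, 1 ≤ E ∧ ∀ k : ℕ, 1 ≤ k → ∀ S : Finset ℝ,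
    (∀ γ ∈ S, 0 < γ ∧ γ ≤ 1) → ∑ γ ∈ S, (ordMult γ : ℝ) ^ (2 * k) ≤ (E * k) ^ (2 * k) := by
  set K : ℝ → ℝ := fun t => 5 * (‖DP (1 / 8) (1 / 4) t‖ + 32768 * π * Real.exp (6 * (1 / 8)) / t + 216 * (π / (1 / 8)) * Real.log (|t| + 4)) with hK
  have hb : ∀ (S : Finset ℝ) (t : ℝ), 0 < t → ∑ γ ∈ S with |γ - t| ≤ 1 / 4, (ordMult γ : ℝ) ≤ K t := by
    intro S t ht
    have := explicit_bound hRH S (a := 1 / 8) (e := 1 / 4) le_rfl (by norm_num) ht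
    rw [hK]; simp only; linarith
  refine ⟨max 1 (K (1 / 4) + K (3 / 4)), le_max_left _ _, fun k hk S hS => ?_⟩
  have hk1 : (1:ℝ) ≤ k := by exact_mod_cast hk
  refine (sum_pow_le _ _ (fun _ => Nat.cast_nonneg _) (by omega)).trans ?_
  apply pow_le_pow_left₀ (Finset.sum_nonneg fun _ _ => Nat.cast_nonneg _)
  have h1 : ∑ γ ∈ S, (ordMult γ : ℝ) ≤ K (1 / 4) + K (3 / 4) := by
    refine le_trans ?_ (add_le_add (hb S (1 / 4) (by norm_num)) (hb S (3 / 4) (by norm_num)))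
    rw [Finset.sum_filter, Finset.sum_filter, ← Finset.sum_add_distrib]
    refine Finset.sum_le_sum fun γ hγ => ?_
    have hm : (0:ℝ) ≤ ordMult γ := Nat.cast_nonneg _
    obtain ⟨h0, h1⟩ := hS γ hγ
    rcases le_total γ (1 / 2) with h | h
    · rw [if_pos (by rw [abs_le]; constructor <;> linarith)]
      split_ifs <;> linarith
    · rw [if_pos (c := |γ - 3 / 4| ≤ 1 / 4) (by rw [abs_le]; constructor <;> linarith)]
      split_ifs <;> linarith
  have h2 := le_max_right 1 (K (1 / 4) + K (3 / 4))
  have h3 := le_max_left 1 (K (1 / 4) + K (3 / 4))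
  nlinarith

lemma all_bound (hRH : RiemannHypothesis) : ∃ E : ℝ, 1 ≤ E ∧ ∀ k : ℕ, 1 ≤ k → ∀ j : ℕ, ∀ T : ℝ, 1 ≤ T → T ≤ 2 ^ j → ∀ S : Finset ℝ,
    (∀ γ ∈ S, 0 < γ ∧ γ ≤ T) → ∑ γ ∈ S, (ordMult γ : ℝ) ^ (2 * k) ≤ 2 * ((E * k) ^ (2 * k) * (T * Real.log (T + 4))) := by
  obtain ⟨E1, hE1, H1⟩ := block_bound hRH
  obtain ⟨E2, hE2, H2⟩ := base_bound hRH
  refine ⟨max E1 E2, hE1.trans (le_max_left _ _), fun k hk => ?_⟩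
  set Q := (max E1 E2 * k) ^ (2 * k) with hQ
  have hQ0 : 0 ≤ Q := by positivity
  have q1 : (E1 * k) ^ (2 * k) ≤ Q := by rw [hQ]; gcongr; exact le_max_left _ _
  have q2 : (E2 * k) ^ (2 * k) ≤ Q := by rw [hQ]; gcongr; exact le_max_right _ _
  have hl1 : ∀ T : ℝ, 1 ≤ T → 1 ≤ Real.log (T + 4) := by
    intro T hT
    rw [Real.le_log_iff_exp_le (by linarith)]
    have := Real.exp_one_lt_d9
    linarith
  have split : ∀ (S : Finset ℝ) (x : ℝ), ∑ γ ∈ S, (ordMult γ : ℝ) ^ (2 * k) =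
      ∑ γ ∈ S with γ ≤ x, (ordMult γ : ℝ) ^ (2 * k) + ∑ γ ∈ S with ¬ γ ≤ x, (ordMult γ : ℝ) ^ (2 * k) :=
    fun S x => (Finset.sum_filter_add_sum_filter_not S _ _).symm
  intro j
  induction j with
  | zero =>
    intro T hT1 hT2 S hS
    have := H2 k hk S (fun γ hγ => ⟨(hS γ hγ).1, (hS γ hγ).2.trans (by simpa using hT2)⟩)
    have hl := hl1 T hT1
    have : Q ≤ Q * (T * Real.log (T + 4)) := by
      have : 1 ≤ T * Real.log (T + 4) := by nlinarith
      nlinarith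
    linarith
  | succ j ih =>
    intro T hT1 hT2 S hS
    have hl := hl1 T hT1
    have hTl : 1 ≤ T * Real.log (T + 4) := by nlinarith
    rw [split S (T / 2)]
    have hblock : ∑ γ ∈ S with ¬ γ ≤ T / 2, (ordMult γ : ℝ) ^ (2 * k) ≤ Q * (T * Real.log (T + 4)) := by
      refine (H1 T hT1 k hk _ fun γ hγ => ?_).trans (by gcongr)
      obtain ⟨h1, h2⟩ := Finset.mem_filter.1 hγ
      exact ⟨(not_le.1 h2).le, (hS γ h1).2⟩
    rcases lt_or_ge T 2 with h | h
    · have := H2 k hk (S.filter fun γ => γ ≤ T / 2) (fun γ hγ => by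
        obtain ⟨h1, h2⟩ := Finset.mem_filter.1 hγ
        exact ⟨(hS γ h1).1, by linarith⟩)
      have : Q ≤ Q * (T * Real.log (T + 4)) := by nlinarith
      linarith
    · have := ih (T / 2) (by linarith) (by rw [pow_succ] at hT2; linarith) (S.filter fun γ => γ ≤ T / 2) (fun γ hγ => by
        obtain ⟨h1, h2⟩ := Finset.mem_filter.1 hγ
        exact ⟨(hS γ h1).1, h2⟩)
      have hlog : Real.log (T / 2 + 4) ≤ Real.log (T + 4) := Real.log_le_log (by linarith) (by linarith)
      have : 2 * (Q * (T / 2 * Real.log (T / 2 + 4))) ≤ 2 * (Q * (T / 2 * Real.log (T + 4))) := by gcongr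
      linarith

lemma final_bound (hRH : RiemannHypothesis) : ∃ C : ℝ, 0 < C ∧ ∀ T : ℝ, 2 ≤ T → ∀ k : ℕ, 1 ≤ k → ∀ S : Finset ℝ,
    (∀ γ ∈ S, 0 < γ ∧ γ ≤ T) → ∑ γ ∈ S, (ordMult γ : ℝ) ^ (2 * k) ≤ (C * k) ^ (2 * k - 1) * (T * Real.log T) := by
  obtain ⟨E, hE, H⟩ := all_bound hRH
  refine ⟨6 * (2 * E * E), by positivity, fun T hT k hk S hS => ?_⟩
  obtain ⟨j, hj⟩ := pow_unbounded_of_one_lt T (by norm_num : (1:ℝ) < 2)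
  refine (H k hk j T (by linarith) hj.le S hS).trans ?_
  have hl : Real.log (T + 4) ≤ 3 * Real.log T := by
    rw [show 3 * Real.log T = Real.log (T ^ 3) by rw [Real.log_pow]; norm_num]
    apply Real.log_le_log (by linarith)
    nlinarith [mul_nonneg (by linarith : 0 ≤ T - 2) (by linarith : 0 ≤ T), mul_nonneg (mul_nonneg (by linarith : 0 ≤ T - 2) (by linarith : 0 ≤ T)) (by linarith : 0 ≤ T)]
  have hl0 : 0 ≤ Real.log T := Real.log_nonneg (by linarith)
  obtain ⟨m, hm⟩ : ∃ m, 2 * k = m + 1 := ⟨2 * k - 1, by omega⟩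
  have hm' : 2 * k - 1 = m := by omega
  have hm0 : m ≠ 0 := by omega
  have hkm : (k:ℝ) ≤ 2 ^ m := by
    have h1 : k < 2 ^ k := Nat.lt_two_pow_self
    have h2 : 2 ^ k ≤ 2 ^ m := Nat.pow_le_pow_right (by norm_num) (by omega)
    exact_mod_cast h1.le.trans h2
  have hEm : E ≤ E ^ m := le_self_pow₀ hE hm0
  have h6m : (6:ℝ) ≤ 6 ^ m := le_self_pow₀ (by norm_num) hm0
  rw [hm', hm]
  calc 2 * ((E * k) ^ (m + 1) * (T * Real.log (T + 4))) ≤ 2 * ((E * k) ^ (m + 1) * (T * (3 * Real.log T))) := by gcongr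
    _ = 6 * (k * E * (E * k) ^ m) * (T * Real.log T) := by ring
    _ ≤ 6 ^ m * (2 ^ m * E ^ m * (E * k) ^ m) * (T * Real.log T) := by gcongr
    _ = (6 * (2 * E * E) * k) ^ m * (T * Real.log T) := by
      rw [← mul_pow, ← mul_pow, ← mul_pow]; congr 2; ring

/-- **Proposition 2, multiplicity bound.** Assume RH. There is a positive absolute constant
`C` such that for all `T ≥ 2` and all positive integers `k`,
`Σ_{0<γ≤T} m(γ)^{2k-1} = Σ_{0<γ_d≤T} m(γ_d)^{2k} ≤ (Ck)^{2k-1} T log T`, where the first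
sum is over ordinates with multiplicity and the second over distinct ordinates. -/
theorem multiplicity_moment (hRH : RiemannHypothesis) :
    ∃ C : ℝ, 0 < C ∧ ∀ T : ℝ, 2 ≤ T → ∀ k : ℕ, 1 ≤ k →
      (∑ᶠ γ ∈ zetaOrds T, (ordMult γ : ℝ) * (ordMult γ : ℝ) ^ (2 * k - 1)) =
          (∑ᶠ γ ∈ zetaOrds T, (ordMult γ : ℝ) ^ (2 * k)) ∧
        (∑ᶠ γ ∈ zetaOrds T, (ordMult γ : ℝ) ^ (2 * k)) ≤
          (C * k) ^ (2 * k - 1) * (T * Real.log T) := by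
  obtain ⟨C, hC, H⟩ := final_bound hRH
  refine ⟨C, hC, fun T hT k hk => ⟨?_, ?_⟩⟩
  · have : ∀ γ : ℝ, (ordMult γ : ℝ) * (ordMult γ : ℝ) ^ (2 * k - 1) = (ordMult γ : ℝ) ^ (2 * k) := by
      intro γ
      rw [← pow_succ']; congr 1; omega
    simp only [this]
  · by_cases hf : (zetaOrds T ∩ Function.support fun γ : ℝ => (ordMult γ : ℝ) ^ (2 * k)).Finite
    · rw [← finsum_mem_inter_support, finsum_mem_eq_finite_toFinset_sum _ hf]
      refine H T hT k hk _ fun γ hγ => ?_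
      have := ((Set.Finite.mem_toFinset hf).1 hγ).1
      exact ⟨this.1, this.2.1⟩
    · rw [finsum_mem_eq_zero_of_infinite hf]
      have : 0 ≤ Real.log T := Real.log_nonneg (by linarith)
      positivity
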